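/- arXiv:2208.07984 — 2 statements merged into one kernel-verified Lean document; each statement's English description precedes it below -/
import Mathlib

section
/- Let N(μ,Σ) and N(μ̃,Σ̃) be d-dimensional Gaussians with dTV(N(μ,Σ), N(μ̃,Σ̃)) ≤ γ for some γ < 1, where Σ and Σ̃ are positive definite. Then ((1-γ)⁴/4)·Σ̃ ⪯ Σ ⪯ (4/(1-γ)⁴)·Σ̃ and (μ-μ̃)(μ-μ̃)ᵀ ⪯ (8γ/(1-γ))·(Σ + Σ̃). -/
open Real MeasureTheory Matrix ProbabilityTheory

/-- The `d`-dimensional Gaussian measure `N(μ, S)`, given by its Lebesgue density. -/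
noncomputable def mvGaussian (d : ℕ) (μ : Fin d → ℝ) (S : Matrix (Fin d) (Fin d) ℝ) :
    Measure (Fin d → ℝ) :=
  volume.withDensity fun x => ENNReal.ofReal
    ((1 / Real.sqrt ((2 * π) ^ d * S.det)) *
      Real.exp (-(1 / 2) * ((fun i => x i - μ i) ⬝ᵥ (S⁻¹ *ᵥ fun i => x i - μ i))))

/-- Loewner (positive semidefinite) order on matrices: `A ⪯ B`. -/
def loewnerLE {d : ℕ} (A B : Matrix (Fin d) (Fin d) ℝ) : Prop := (B - A).PosSemidef

/-- Total variation distance between two measures. -/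
noncomputable def tvDist {α : Type*} [MeasurableSpace α] (P Q : Measure α) : ℝ :=
  ⨆ s : {s : Set α // MeasurableSet s}, |(P s.1).toReal - (Q s.1).toReal|


theorem lint_aff {d : ℕ} (μ : Fin d → ℝ) (A : Matrix (Fin d) (Fin d) ℝ) (hA : A.det ≠ 0)
    (g : (Fin d → ℝ) → ENNReal) (hg : Measurable g) :
    ∫⁻ x, g x = ENNReal.ofReal |A.det| * ∫⁻ z, g (μ + A *ᵥ z) := by
  have hm : Measurable (toLin' A) := (LinearMap.continuous_of_finiteDimensional _).measurable
  have h1 : ∫⁻ z, g (μ + A *ᵥ z) = ∫⁻ y, g (μ + y) ∂(Measure.map (toLin' A) volume) := by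
    rw [lintegral_map (by fun_prop) hm]; simp [toLin'_apply]
  rw [h1, Real.map_matrix_volume_pi_eq_smul_volume_pi hA, lintegral_smul_measure,
    lintegral_add_left_eq_self, smul_eq_mul, ← mul_assoc, ← ENNReal.ofReal_mul (abs_nonneg _),
    ← abs_mul, mul_inv_cancel₀ hA]
  simp

theorem pi_gauss (d : ℕ) : Measure.pi (fun _ : Fin d => gaussianReal 0 1) =
    volume.withDensity (fun x => ENNReal.ofReal (∏ i, gaussianPDFReal 0 1 (x i))) := by
  apply Measure.pi_eq
  intro s hs
  rw [withDensity_apply _ (MeasurableSet.univ_pi hs), volume_pi, Measure.restrict_pi_pi,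
    ← ofReal_integral_eq_lintegral_ofReal, integral_fintype_prod_eq_prod]
  · rw [ENNReal.ofReal_prod_of_nonneg]
    · simp [gaussianReal_apply_eq_integral]
    · intro i _; exact integral_nonneg (fun x => gaussianPDFReal_nonneg _ _ _)
  · exact Integrable.fintype_prod (fun i => (integrable_gaussianPDFReal 0 1).restrict)
  · exact Filter.Eventually.of_forall fun x => Finset.prod_nonneg fun i _ => gaussianPDFReal_nonneg _ _ _

theorem exists_sqrt {d : ℕ} (S : Matrix (Fin d) (Fin d) ℝ) (hS : S.PosDef) :
    ∃ A : Matrix (Fin d) (Fin d) ℝ, A.det ≠ 0 ∧ A * Aᵀ = S := by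
  open scoped MatrixOrder in
  have h1 := CFC.sqrt_mul_sqrt_self S hS.posSemidef.nonneg
  have h2 : (CFC.sqrt S)ᵀ = CFC.sqrt S := by
    have := (CFC.sqrt_nonneg S).isSelfAdjoint
    rw [isSelfAdjoint_iff, star_eq_conjTranspose, conjTranspose_eq_transpose_of_trivial] at this
    exact this
  refine ⟨CFC.sqrt S, fun h => ?_, by rw [h2, h1]⟩
  have := hS.det_pos
  rw [← h1, det_mul, h] at this
  simp at this

theorem proj_law {d : ℕ} (c : ℝ) (w : Fin d → ℝ) :
    (Measure.pi (fun _ : Fin d => gaussianReal 0 1)).map (fun z => c + w ⬝ᵥ z) =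
      gaussianReal c (w ⬝ᵥ w).toNNReal := by
  have hm : Measurable (fun z : Fin d → ℝ => c + w ⬝ᵥ z) := by unfold dotProduct; fun_prop
  have := Measure.isProbabilityMeasure_map (μ := Measure.pi (fun _ : Fin d => gaussianReal 0 1)) hm.aemeasurable
  apply Measure.ext_of_charFun
  ext t
  rw [charFun_gaussianReal, charFun_apply_real, integral_map hm.aemeasurable (by fun_prop)]
  have : ∀ z : Fin d → ℝ, Complex.exp (t * ((c + w ⬝ᵥ z : ℝ) : ℂ) * Complex.I) =
      Complex.exp (t * c * Complex.I) * ∏ i, Complex.exp (((t * w i : ℝ) : ℂ) * (z i : ℂ) * Complex.I) := by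
    intro z
    rw [← Complex.exp_sum, ← Complex.exp_add]
    congr 1
    simp only [dotProduct]
    push_cast
    rw [mul_add, add_mul, Finset.mul_sum, Finset.sum_mul]
    congr 1
    exact Finset.sum_congr rfl fun i _ => by ring
  simp_rw [this]
  rw [integral_const_mul, integral_fintype_prod_eq_prod (f := fun i (x : ℝ) => Complex.exp (((t * w i : ℝ) : ℂ) * (x : ℂ) * Complex.I))]
  simp_rw [← charFun_apply_real, charFun_gaussianReal]
  rw [← Complex.exp_sum, ← Complex.exp_add]
  congr 1
  have h0 : 0 ≤ w ⬝ᵥ w := Finset.sum_nonneg fun i _ => mul_self_nonneg _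
  have : (((w ⬝ᵥ w).toNNReal : ℝ) : ℂ) = ∑ i, (w i : ℂ) * w i := by
    rw [Real.coe_toNNReal _ h0]; simp [dotProduct]
  rw [this, sub_eq_add_neg]
  congr 1
  rw [Finset.sum_mul, Finset.sum_div, ← Finset.sum_neg_distrib]
  refine Finset.sum_congr rfl fun i _ => ?_
  push_cast
  ring

theorem mv_eq_map {d : ℕ} (μ : Fin d → ℝ) (S A : Matrix (Fin d) (Fin d) ℝ) (hA : A.det ≠ 0)
    (hS : A * Aᵀ = S) :
    mvGaussian d μ S =
      (Measure.pi (fun _ : Fin d => gaussianReal 0 1)).map (fun z => μ + A *ᵥ z) := by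
  have hm : Measurable (fun z : Fin d → ℝ => μ + A *ᵥ z) := by
    have : Continuous (fun z : Fin d → ℝ => μ + A *ᵥ z) := by fun_prop
    exact this.measurable
  have hdm : Measurable (fun x : Fin d → ℝ => ENNReal.ofReal
    ((1 / Real.sqrt ((2 * π) ^ d * S.det)) *
      Real.exp (-(1 / 2) * ((fun i => x i - μ i) ⬝ᵥ (S⁻¹ *ᵥ fun i => x i - μ i))))) := by
    apply Measurable.ennreal_ofReal
    apply Continuous.measurable
    simp only [dotProduct, mulVec]
    fun_prop
  ext s hs
  rw [Measure.map_apply hm hs, pi_gauss, mvGaussian, withDensity_apply _ hs,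
    withDensity_apply _ (hm hs), ← lintegral_indicator hs, ← lintegral_indicator (hm hs),
    lint_aff μ A hA _ (hdm.indicator hs), ← lintegral_const_mul']
  swap
  · simp
  congr 1
  ext z
  by_cases h : μ + A *ᵥ z ∈ s
  swap
  · rw [Set.indicator_of_notMem h, Set.indicator_of_notMem (show z ∉ (fun z => μ + A *ᵥ z) ⁻¹' s from h),
      mul_zero]
  rw [Set.indicator_of_mem h, Set.indicator_of_mem (show z ∈ (fun z => μ + A *ᵥ z) ⁻¹' s from h)]
  rw [← ENNReal.ofReal_mul (abs_nonneg _)]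
  congr 1
  have e1 : (fun i => (μ + A *ᵥ z) i - μ i) = A *ᵥ z := by ext i; simp
  have hu : IsUnit A.det := hA.isUnit
  have hut : IsUnit Aᵀ.det := by rwa [det_transpose]
  have e2 : (A *ᵥ z) ⬝ᵥ (S⁻¹ *ᵥ (A *ᵥ z)) = z ⬝ᵥ z := by
    rw [← hS, Matrix.mul_inv_rev, ← mulVec_mulVec, mulVec_mulVec z A⁻¹ A, nonsing_inv_mul A hu, one_mulVec,
      dotProduct_mulVec, ← mulVec_transpose, mulVec_mulVec, transpose_nonsing_inv,
      transpose_transpose, nonsing_inv_mul A hu, one_mulVec]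
  rw [e1, e2]
  have e3 : √((2 * π) ^ d * S.det) = √(2 * π) ^ d * |A.det| := by
    rw [← hS, det_mul, det_transpose, Real.sqrt_mul (by positivity), Real.sqrt_mul_self_eq_abs]
    congr 1
    rw [Real.sqrt_eq_iff_mul_self_eq (by positivity) (by positivity), ← mul_pow, Real.mul_self_sqrt (by positivity)]
  rw [e3]
  simp only [gaussianPDFReal_def]
  rw [Finset.prod_mul_distrib, ← Real.exp_sum]
  have : |A.det| ≠ 0 := abs_ne_zero.mpr hA
  simp only [dotProduct, Finset.prod_const, Finset.card_univ, Fintype.card_fin, NNReal.coe_one, mul_one, sub_zero]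
  rw [Finset.mul_sum, ← mul_assoc]
  congr 1
  · rw [inv_pow]
    field_simp
  · congr 1
    exact Finset.sum_congr rfl fun i _ => by ring

theorem mv_proj {d : ℕ} (μ v : Fin d → ℝ) (S : Matrix (Fin d) (Fin d) ℝ) (hS : S.PosDef) :
    IsProbabilityMeasure (mvGaussian d μ S) ∧
    (mvGaussian d μ S).map (fun x => v ⬝ᵥ x) = gaussianReal (v ⬝ᵥ μ) (v ⬝ᵥ S *ᵥ v).toNNReal := by
  obtain ⟨A, hA, rfl⟩ := exists_sqrt S hS
  have hm : Measurable (fun z : Fin d → ℝ => μ + A *ᵥ z) := by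
    have : Continuous (fun z : Fin d → ℝ => μ + A *ᵥ z) := by fun_prop
    exact this.measurable
  have hv : Measurable (fun z : Fin d → ℝ => v ⬝ᵥ z) := by unfold dotProduct; fun_prop
  rw [mv_eq_map μ _ A hA rfl]
  refine ⟨Measure.isProbabilityMeasure_map hm.aemeasurable, ?_⟩
  rw [Measure.map_map hv hm]
  have e : ((fun x => v ⬝ᵥ x) ∘ fun z => μ + A *ᵥ z) = fun z => v ⬝ᵥ μ + (Aᵀ *ᵥ v) ⬝ᵥ z := by
    ext z
    simp [dotProduct_add, dotProduct_mulVec, mulVec_transpose]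
  rw [e, proj_law]
  congr 2
  rw [← mulVec_mulVec, dotProduct_mulVec v A, mulVec_transpose]

theorem oneD (m₁ m₂ : ℝ) (v₁ v₂ : NNReal) (h₁ : 0 < v₁) (h₂ : 0 < v₂) (γ : ℝ) (hγ : γ < 1)
    (h : ∀ s : Set ℝ, MeasurableSet s →
      (gaussianReal m₁ v₁ s).toReal - (gaussianReal m₂ v₂ s).toReal ≤ γ) :
    (1 - γ) ^ 4 ≤ 4 * v₁ * v₂ / (v₁ + v₂ : ℝ) ^ 2 * rexp (-(m₁ - m₂) ^ 2 / (v₁ + v₂)) := by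
  set p := gaussianPDFReal m₁ v₁ with hp
  set q := gaussianPDFReal m₂ v₂ with hq
  have ip : Integrable p := integrable_gaussianPDFReal _ _
  have iq : Integrable q := integrable_gaussianPDFReal _ _
  have p0 : ∀ x, 0 ≤ p x := gaussianPDFReal_nonneg _ _
  have q0 : ∀ x, 0 ≤ q x := gaussianPDFReal_nonneg _ _
  have hv₁ : (0:ℝ) < v₁ := h₁
  have hv₂ : (0:ℝ) < v₂ := h₂
  set K : ℝ := (√(2 * π * v₁))⁻¹ * (√(2 * π * v₂))⁻¹ with hK
  set b : ℝ := (v₁ + v₂) / (4 * v₁ * v₂) with hb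
  set c : ℝ := (m₁ * v₂ + m₂ * v₁) / (v₁ + v₂) with hc
  set D : ℝ := rexp (-(m₁ - m₂) ^ 2 / (4 * (v₁ + v₂))) with hD
  have hb0 : 0 < b := by positivity
  have hK0 : 0 ≤ K := by positivity
  have hr : ∀ x, √(p x * q x) = √K * D * rexp (-b * (x - c) ^ 2) := by
    intro x
    have : p x * q x = K * (D * rexp (-b * (x - c) ^ 2)) ^ 2 := by
      rw [hp, hq, gaussianPDFReal_def, gaussianPDFReal_def, hK, hD, ← Real.exp_add, ← Real.exp_nat_mul]
      have : rexp (((2:ℕ):ℝ) * (-(m₁ - m₂) ^ 2 / (4 * (v₁ + v₂)) + -b * (x - c) ^ 2)) =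
        rexp (-(x - m₁) ^ 2 / (2 * v₁)) * rexp (-(x - m₂) ^ 2 / (2 * v₂)) := by
        rw [← Real.exp_add, hb, hc]
        congr 1
        push_cast
        field_simp
        ring
      rw [this]
      ring
    rw [this, Real.sqrt_mul hK0, Real.sqrt_sq (by positivity)]
    ring
  have ir : Integrable (fun x => √(p x * q x)) := by
    simp_rw [hr]
    exact ((integrable_exp_neg_mul_sq hb0).comp_sub_right c).const_mul _
  have hI : ∫ x, √(p x * q x) = √K * D * √(π / b) := by
    simp_rw [hr]
    rw [integral_const_mul, integral_sub_right_eq_self (fun x => rexp (-b * x ^ 2)) c, integral_gaussian]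
  have hms : MeasurableSet {x | q x ≤ p x} :=
    measurableSet_le (measurable_gaussianPDFReal _ _) (measurable_gaussianPDFReal _ _)
  have h3 := h _ hms
  rw [gaussianReal_apply_eq_integral _ h₁.ne', gaussianReal_apply_eq_integral _ h₂.ne',
    ENNReal.toReal_ofReal (integral_nonneg p0), ENNReal.toReal_ofReal (integral_nonneg q0)] at h3
  have h4 := integral_add_compl hms ip
  have h5 := integral_add_compl hms ir
  have h6 : ∫ x, p x = 1 := integral_gaussianPDFReal_eq_one _ h₁.ne'
  have h7 : ∫ x in {x | q x ≤ p x}, q x ≤ ∫ x in {x | q x ≤ p x}, √(p x * q x) := by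
    apply setIntegral_mono_on iq.integrableOn ir.integrableOn hms
    intro x hx
    apply Real.le_sqrt_of_sq_le
    have := mul_le_mul_of_nonneg_right hx (q0 x)
    nlinarith
  have h8 : ∫ x in {x | q x ≤ p x}ᶜ, p x ≤ ∫ x in {x | q x ≤ p x}ᶜ, √(p x * q x) := by
    apply setIntegral_mono_on ip.integrableOn ir.integrableOn hms.compl
    intro x hx
    have hx : p x < q x := not_le.mp hx
    apply Real.le_sqrt_of_sq_le
    have := mul_le_mul_of_nonneg_left hx.le (p0 x)
    nlinarith
  have h9 : 1 - γ ≤ √K * D * √(π / b) := by linarith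
  have h10 : (1 - γ) ^ 4 ≤ (√K * D * √(π / b)) ^ 4 :=
    pow_le_pow_left₀ (by linarith) h9 4
  refine h10.trans (le_of_eq ?_)
  have e1 : √K ^ 4 = K ^ 2 := by
    rw [show 4 = 2 * 2 by rfl, pow_mul, Real.sq_sqrt hK0]
  have e2 : √(π / b) ^ 4 = (π / b) ^ 2 := by
    rw [show 4 = 2 * 2 by rfl, pow_mul, Real.sq_sqrt (by positivity)]
  have e3 : D ^ 4 = rexp (-(m₁ - m₂) ^ 2 / (v₁ + v₂)) := by
    rw [hD, ← Real.exp_nat_mul]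
    congr 1
    push_cast
    field_simp
  have e4 : K ^ 2 = (2 * π * v₁)⁻¹ * (2 * π * v₂)⁻¹ := by
    rw [hK, mul_pow, inv_pow, inv_pow, Real.sq_sqrt (by positivity), Real.sq_sqrt (by positivity)]
  rw [mul_pow, mul_pow, e1, e2, e3, e4, hb]
  field_simp
  ring

theorem num_bounds (a b D γ : ℝ) (ha : 0 < a) (hb : 0 < b) (hγ : γ < 1)
    (h : (1 - γ) ^ 4 ≤ 4 * a * b / (a + b) ^ 2 * rexp (-D ^ 2 / (a + b))) :
    (1 - γ) ^ 4 / 4 * b ≤ a ∧ a ≤ 4 / (1 - γ) ^ 4 * b ∧ D ^ 2 ≤ 4 * γ / (1 - γ) * (a + b) := by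
  have g0 : 0 < 1 - γ := by linarith
  have g4 : 0 < (1 - γ) ^ 4 := by positivity
  have hab : 0 < a + b := by positivity
  have k0 : 0 ≤ 4 * a * b / (a + b) ^ 2 := by positivity
  have k1 : 4 * a * b / (a + b) ^ 2 ≤ 1 := by
    rw [div_le_one (by positivity)]; nlinarith [sq_nonneg (a - b)]
  have x1 : rexp (-D ^ 2 / (a + b)) ≤ 1 := by
    rw [Real.exp_le_one_iff]
    exact div_nonpos_of_nonpos_of_nonneg (by nlinarith [sq_nonneg D]) hab.le
  have A1 : (1 - γ) ^ 4 ≤ 4 * a * b / (a + b) ^ 2 := h.trans (mul_le_of_le_one_right k0 x1)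
  have A2 : (1 - γ) ^ 4 ≤ rexp (-D ^ 2 / (a + b)) :=
    h.trans (mul_le_of_le_one_left (Real.exp_pos _).le k1)
  rw [le_div_iff₀ (by positivity)] at A1
  have ab := mul_pos ha hb
  refine ⟨?_, ?_, ?_⟩
  · have : (1 - γ) ^ 4 * (b * b) ≤ 4 * a * b := le_trans (mul_le_mul_of_nonneg_left (by nlinarith) g4.le) A1
    have : (1 - γ) ^ 4 * b ≤ 4 * a := le_of_mul_le_mul_right (by linarith) hb
    linarith
  · have : (1 - γ) ^ 4 * (a * a) ≤ 4 * a * b := le_trans (mul_le_mul_of_nonneg_left (by nlinarith) g4.le) A1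
    have : a * (1 - γ) ^ 4 ≤ 4 * b := le_of_mul_le_mul_right (by linarith) ha
    rw [div_mul_eq_mul_div, le_div_iff₀ g4]
    exact this
  · have := Real.log_le_log g4 A2
    rw [Real.log_exp, Real.log_pow] at this
    have l := Real.one_sub_inv_le_log_of_pos g0
    have e : 1 - (1 - γ)⁻¹ = -(γ / (1 - γ)) := by field_simp; ring
    rw [e] at l
    have : D ^ 2 / (a + b) ≤ 4 * (γ / (1 - γ)) := by
      rw [neg_div] at this
      push_cast at this
      linarith
    rw [div_le_iff₀ hab] at this
    rwa [mul_div_assoc]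

theorem main_bounds {d : ℕ} (μ μt : Fin d → ℝ)
    (S St : Matrix (Fin d) (Fin d) ℝ) (hS : S.PosDef) (hSt : St.PosDef) (γ : ℝ) (hγ : γ < 1)
    (htv : tvDist (mvGaussian d μ S) (mvGaussian d μt St) ≤ γ) (v : Fin d → ℝ) :
    (1 - γ) ^ 4 / 4 * (v ⬝ᵥ St *ᵥ v) ≤ v ⬝ᵥ S *ᵥ v ∧
    v ⬝ᵥ S *ᵥ v ≤ 4 / (1 - γ) ^ 4 * (v ⬝ᵥ St *ᵥ v) ∧
    (v ⬝ᵥ μ - v ⬝ᵥ μt) ^ 2 ≤ 8 * γ / (1 - γ) * (v ⬝ᵥ S *ᵥ v + v ⬝ᵥ St *ᵥ v) := by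
  by_cases hv : v = 0
  · simp [hv]
  have a0 : 0 < v ⬝ᵥ S *ᵥ v := by simpa using hS.dotProduct_mulVec_pos hv
  have b0 : 0 < v ⬝ᵥ St *ᵥ v := by simpa using hSt.dotProduct_mulVec_pos hv
  obtain ⟨iP, hP⟩ := mv_proj μ v S hS
  obtain ⟨iQ, hQ⟩ := mv_proj μt v St hSt
  have hm : Measurable (fun z : Fin d → ℝ => v ⬝ᵥ z) := by unfold dotProduct; fun_prop
  have key : ∀ s : Set (Fin d → ℝ), MeasurableSet s →
      |(mvGaussian d μ S s).toReal - (mvGaussian d μt St s).toReal| ≤ γ := by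
    intro s hs
    refine le_trans ?_ htv
    refine le_ciSup (f := fun s : {s : Set (Fin d → ℝ) // MeasurableSet s} =>
      |(mvGaussian d μ S s.1).toReal - (mvGaussian d μt St s.1).toReal|) ?_ ⟨s, hs⟩
    refine ⟨1, ?_⟩
    rintro _ ⟨t, rfl⟩
    have k1 : (mvGaussian d μ S t.1).toReal ≤ 1 := measureReal_le_one
    have k2 : (mvGaussian d μt St t.1).toReal ≤ 1 := measureReal_le_one
    have k3 := ENNReal.toReal_nonneg (a := mvGaussian d μ S t.1)
    have k4 := ENNReal.toReal_nonneg (a := mvGaussian d μt St t.1)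
    exact abs_le.mpr ⟨by linarith, by linarith⟩
  have g0 : 0 ≤ γ := (abs_nonneg _).trans (key ∅ MeasurableSet.empty)
  have h1 := oneD (v ⬝ᵥ μ) (v ⬝ᵥ μt) (v ⬝ᵥ S *ᵥ v).toNNReal (v ⬝ᵥ St *ᵥ v).toNNReal
    (by simpa using a0) (by simpa using b0) γ hγ (by
      intro s hs
      rw [← hP, ← hQ, Measure.map_apply hm hs, Measure.map_apply hm hs]
      exact (le_abs_self _).trans (key _ (hm hs)))
  rw [Real.coe_toNNReal _ a0.le, Real.coe_toNNReal _ b0.le] at h1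
  obtain ⟨r1, r2, r3⟩ := num_bounds _ _ _ _ a0 b0 hγ h1
  refine ⟨r1, r2, r3.trans ?_⟩
  have : 0 < 1 - γ := by linarith
  gcongr
  norm_num

theorem gaussian_tv_loewner_bounds {d : ℕ} (μ μt : Fin d → ℝ)
    (S St : Matrix (Fin d) (Fin d) ℝ) (hS : S.PosDef) (hSt : St.PosDef) (γ : ℝ) (hγ : γ < 1)
    (htv : tvDist (mvGaussian d μ S) (mvGaussian d μt St) ≤ γ) :
    loewnerLE (((1 - γ) ^ 4 / 4) • St) S ∧
    loewnerLE S ((4 / (1 - γ) ^ 4) • St) ∧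
    loewnerLE (Matrix.vecMulVec (μ - μt) (μ - μt)) ((8 * γ / (1 - γ)) • (S + St)) := by
  have key := main_bounds μ μt S St hS hSt γ hγ htv
  have hs := hS.isHermitian
  have hst := hSt.isHermitian
  have smulH : ∀ (c : ℝ) (M : Matrix (Fin d) (Fin d) ℝ), M.IsHermitian → (c • M).IsHermitian := by
    intro c M hM
    rw [Matrix.IsHermitian, conjTranspose_smul, hM.eq, star_trivial]
  refine ⟨?_, ?_, ?_⟩
  · refine PosSemidef.of_dotProduct_mulVec_nonneg (hs.sub (smulH _ _ hst)) fun v => ?_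
    rw [star_trivial, sub_mulVec, smul_mulVec, dotProduct_sub, dotProduct_smul, smul_eq_mul]
    linarith [(key v).1]
  · refine PosSemidef.of_dotProduct_mulVec_nonneg ((smulH _ _ hst).sub hs) fun v => ?_
    rw [star_trivial, sub_mulVec, smul_mulVec, dotProduct_sub, dotProduct_smul, smul_eq_mul]
    linarith [(key v).2.1]
  · have hvv : (vecMulVec (μ - μt) (μ - μt)).IsHermitian := by
      ext i j
      simp [vecMulVec_apply, mul_comm]
    refine PosSemidef.of_dotProduct_mulVec_nonneg ((smulH _ _ (hs.add hst)).sub hvv) fun v => ?_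
    have e : v ⬝ᵥ vecMulVec (μ - μt) (μ - μt) *ᵥ v = (v ⬝ᵥ μ - v ⬝ᵥ μt) ^ 2 := by
      rw [vecMulVec_mulVec, ← dotProduct_sub, dotProduct_comm (μ - μt) v]
      simp [sq]
    rw [star_trivial, sub_mulVec, smul_mulVec, dotProduct_sub, dotProduct_smul, smul_eq_mul, e,
      add_mulVec, dotProduct_add]
    linarith [(key v).2.2]
end

section
/- Let Z ∈ ℝ^{d×d} be a random matrix with i.i.d. N(0,1) entries. Then the smallest singular value σ_d(Z) satisfies P[σ_d(Z) ≤ β/√d] ≤ β, and the largest singular value σ_1(Z) satisfies P[σ_1(Z) ≥ 2√d + √(2·log(1/β))] ≤ β. -/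
open Real MeasureTheory Matrix ProbabilityTheory

/-- Smallest singular value of a square matrix: `inf` of `‖Zv‖` over unit vectors `v`. -/
noncomputable def smallestSingularValue {d : ℕ} (Z : Matrix (Fin d) (Fin d) ℝ) : ℝ :=
  sInf {t | ∃ v : Fin d → ℝ, ∑ i, v i ^ 2 = 1 ∧ t = Real.sqrt (∑ i, (Z *ᵥ v) i ^ 2)}

/-- Largest singular value of a square matrix: `sup` of `‖Zv‖` over unit vectors `v`. -/
noncomputable def largestSingularValue {d : ℕ} (Z : Matrix (Fin d) (Fin d) ℝ) : ℝ :=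
  sSup {t | ∃ v : Fin d → ℝ, ∑ i, v i ^ 2 = 1 ∧ t = Real.sqrt (∑ i, (Z *ᵥ v) i ^ 2)}

noncomputable abbrev gv (n : ℕ) : Measure (Fin n → ℝ) := Measure.pi fun _ : Fin n => gaussianReal 0 1
noncomputable abbrev gm (n : ℕ) : Measure (Fin n → Fin n → ℝ) := Measure.pi fun _ : Fin n => gv n

theorem gv_rot {n : ℕ} (U : Matrix (Fin n) (Fin n) ℝ) (hU : Uᵀ * U = 1) :
    MeasurePreserving (fun x => U *ᵥ x) (gv n) (gv n) := by
  have hm : Measurable (fun x : Fin n → ℝ => U *ᵥ x) := by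
    exact (Continuous.matrix_mulVec continuous_const continuous_id).measurable
  refine ⟨hm, ?_⟩
  let L : EuclideanSpace ℝ (Fin n) →ₗᵢ[ℝ] EuclideanSpace ℝ (Fin n) :=
    { toLinearMap := Matrix.toEuclideanLin U
      norm_map' := by
        intro x
        have h : (U *ᵥ (WithLp.ofLp x)) ⬝ᵥ (U *ᵥ (WithLp.ofLp x)) = (WithLp.ofLp x) ⬝ᵥ (WithLp.ofLp x) := by
          rw [Matrix.dotProduct_mulVec, ← Matrix.mulVec_transpose, Matrix.mulVec_mulVec, hU, Matrix.one_mulVec]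
        rw [EuclideanSpace.norm_eq, EuclideanSpace.norm_eq]
        congr 1
        simp only [dotProduct, ← pow_two] at h
        simpa using h }
  let e : EuclideanSpace ℝ (Fin n) ≃ₗᵢ[ℝ] EuclideanSpace ℝ (Fin n) := L.toLinearIsometryEquiv rfl
  have h1 := stdGaussian_map e
  rw [← map_pi_eq_stdGaussian, Measure.map_map (by fun_prop) (by fun_prop)] at h1
  have h2 := congrArg (fun m => m.map (WithLp.ofLp)) h1
  simp only at h2
  rw [Measure.map_map (by fun_prop) (by fun_prop), Measure.map_map (by fun_prop) (by fun_prop)] at h2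
  have e1 : (WithLp.ofLp ∘ e ∘ WithLp.toLp 2) = fun x : Fin n → ℝ => U *ᵥ x := by
    ext x i
    rfl
  have e2 : ((WithLp.ofLp : EuclideanSpace ℝ (Fin n) → _) ∘ WithLp.toLp 2) = (id : (Fin n → ℝ) → _) := by
    ext x i
    rfl
  rw [e1, e2, Measure.map_id] at h2
  exact h2

theorem gm_transpose (n : ℕ) : MeasurePreserving (fun (Z : Fin n → Fin n → ℝ) i j => Z j i) (gm n) (gm n) := by
  have hm : Measurable (fun (Z : Fin n → Fin n → ℝ) i j => Z j i) := by fun_prop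
  have hg : gm n = (Measure.pi fun _ : Fin n × Fin n => gaussianReal 0 1).map (MeasurableEquiv.curry (Fin n) (Fin n) ℝ) := by
    have := Measure.infinitePi_map_curry (X := ℝ) (μ := fun (_ : Fin n) (_ : Fin n) => gaussianReal 0 1)
    simp only [Measure.infinitePi_eq_pi] at this
    exact this.symm
  refine ⟨hm, ?_⟩
  have hs := measurePreserving_piCongrLeft (fun _ : Fin n × Fin n => gaussianReal 0 1) (Equiv.prodComm (Fin n) (Fin n))
  conv_rhs => rw [hg, ← hs.map_eq]
  conv_lhs => rw [hg]
  rw [Measure.map_map hm (by fun_prop), Measure.map_map (by fun_prop) (by fun_prop)]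
  congr 1

theorem gm_rot {n : ℕ} (U : Matrix (Fin n) (Fin n) ℝ) (hU : Uᵀ * U = 1) :
    MeasurePreserving (fun (Z : Fin n → Fin n → ℝ) i j => (U * Matrix.of Z) i j) (gm n) (gm n) := by
  have h1 : MeasurePreserving (fun (Z : Fin n → Fin n → ℝ) i => U *ᵥ (Z i)) (gm n) (gm n) :=
    measurePreserving_pi _ _ (fun i => gv_rot U hU)
  have := (gm_transpose n).comp (h1.comp (gm_transpose n))
  exact this

theorem gauss_exp_sq (c : ℝ) (hc : -1 < c) :
    Integrable (fun x => rexp (-c * x ^ 2 / 2)) (gaussianReal 0 1) ∧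
    ∫ x, rexp (-c * x ^ 2 / 2) ∂(gaussianReal 0 1) = (√(1 + c))⁻¹ := by
  have h0 : ∀ x : ℝ, gaussianPDFReal 0 1 x * rexp (-c * x ^ 2 / 2) = (√(2 * π))⁻¹ * rexp (-((1 + c) / 2) * x ^ 2) := by
    intro x
    rw [gaussianPDFReal_def]
    simp only [NNReal.coe_one, mul_one, sub_zero]
    rw [mul_assoc, ← Real.exp_add]
    congr 2
    ring
  constructor
  · rw [gaussianReal_of_var_ne_zero _ one_ne_zero]
    rw [integrable_withDensity_iff_integrable_smul' (measurable_gaussianPDF _ _) (by simp [gaussianPDF_lt_top])]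
    simp only [toReal_gaussianPDF, smul_eq_mul, h0]
    exact (integrable_exp_neg_mul_sq (by linarith)).const_mul _
  · rw [integral_gaussianReal_eq_integral_smul one_ne_zero]
    simp only [smul_eq_mul, h0]
    rw [integral_const_mul, integral_gaussian, ← Real.sqrt_inv, ← Real.sqrt_inv, ← Real.sqrt_mul (by positivity)]
    congr 1
    have : 1 + c ≠ 0 := by linarith
    field_simp

theorem gv_coord {n : ℕ} (i : Fin n) : MeasurePreserving (fun x : Fin n → ℝ => x i) (gv n) (gaussianReal 0 1) :=
  measurePreserving_eval _ i


theorem dot_self_eq {n : ℕ} (v : Fin n → ℝ) : ∑ i, v i ^ 2 = v ⬝ᵥ v := by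
  simp [dotProduct, pow_two]

theorem dot_self_nn {n : ℕ} (v : Fin n → ℝ) : 0 ≤ v ⬝ᵥ v := by
  rw [← dot_self_eq]; positivity

theorem dot_self_pos {n : ℕ} {v : Fin n → ℝ} (h : v ≠ 0) : 0 < v ⬝ᵥ v :=
  lt_of_le_of_ne (dot_self_nn v) (fun h' => h (dotProduct_self_eq_zero.1 h'.symm))

theorem isCompact_sph (n : ℕ) : IsCompact {v : Fin n → ℝ | v ⬝ᵥ v = 1} := by
  refine Metric.isCompact_of_isClosed_isBounded (isClosed_eq (by fun_prop) continuous_const) ?_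
  refine (Metric.isBounded_iff_subset_closedBall 0).2 ⟨1, fun v hv => ?_⟩
  rw [mem_closedBall_zero_iff, pi_norm_le_iff_of_nonneg zero_le_one]
  intro i
  have h1 : v i ^ 2 ≤ ∑ i, v i ^ 2 := Finset.single_le_sum (f := fun i => v i ^ 2) (fun i _ => sq_nonneg _) (Finset.mem_univ i)
  rw [dot_self_eq, hv.out] at h1
  rw [Real.norm_eq_abs]
  exact abs_le_one_iff_mul_self_le_one.2 (by nlinarith)

theorem sph_nonempty {n : ℕ} (i : Fin n) : (Pi.single i 1 : Fin n → ℝ) ⬝ᵥ Pi.single i 1 = 1 := by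
  simp

theorem small_eq {n : ℕ} (Z : Matrix (Fin n) (Fin n) ℝ) :
    smallestSingularValue Z = sInf ((fun v : Fin n → ℝ => √((Z *ᵥ v) ⬝ᵥ (Z *ᵥ v))) '' {v | v ⬝ᵥ v = 1}) := by
  unfold smallestSingularValue
  congr 1
  ext t
  simp only [dot_self_eq, Set.mem_setOf_eq, Set.mem_image]
  exact ⟨fun ⟨v, h, h'⟩ => ⟨v, h, h'.symm⟩, fun ⟨v, h, h'⟩ => ⟨v, h, h'.symm⟩⟩

theorem large_eq {n : ℕ} (Z : Matrix (Fin n) (Fin n) ℝ) :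
    largestSingularValue Z = sSup ((fun v : Fin n → ℝ => √((Z *ᵥ v) ⬝ᵥ (Z *ᵥ v))) '' {v | v ⬝ᵥ v = 1}) := by
  unfold largestSingularValue
  congr 1
  ext t
  simp only [dot_self_eq, Set.mem_setOf_eq, Set.mem_image]
  exact ⟨fun ⟨v, h, h'⟩ => ⟨v, h, h'.symm⟩, fun ⟨v, h, h'⟩ => ⟨v, h, h'.symm⟩⟩

theorem small_cont (n : ℕ) : Continuous (fun Z : Fin n → Fin n → ℝ => smallestSingularValue (Matrix.of Z)) := by
  simp only [small_eq]
  refine (isCompact_sph n).continuous_sInf (f := fun (Z : Fin n → Fin n → ℝ) (v : Fin n → ℝ) => √((Matrix.of Z *ᵥ v) ⬝ᵥ (Matrix.of Z *ᵥ v))) ?_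
  refine Real.continuous_sqrt.comp ?_
  have : Continuous fun p : (Fin n → Fin n → ℝ) × (Fin n → ℝ) => Matrix.of p.1 *ᵥ p.2 := by
    refine Continuous.matrix_mulVec ?_ continuous_snd
    exact continuous_fst
  exact this.dotProduct this

theorem large_cont (n : ℕ) : Continuous (fun Z : Fin n → Fin n → ℝ => largestSingularValue (Matrix.of Z)) := by
  simp only [large_eq]
  refine (isCompact_sph n).continuous_sSup (f := fun (Z : Fin n → Fin n → ℝ) (v : Fin n → ℝ) => √((Matrix.of Z *ᵥ v) ⬝ᵥ (Matrix.of Z *ᵥ v))) ?_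
  refine Real.continuous_sqrt.comp ?_
  have : Continuous fun p : (Fin n → Fin n → ℝ) × (Fin n → ℝ) => Matrix.of p.1 *ᵥ p.2 := by
    refine Continuous.matrix_mulVec ?_ continuous_snd
    exact continuous_fst
  exact this.dotProduct this

theorem small_nonneg {n : ℕ} (Z : Matrix (Fin n) (Fin n) ℝ) : 0 ≤ smallestSingularValue Z := by
  rw [small_eq]
  apply Real.sInf_nonneg
  rintro _ ⟨v, _, rfl⟩
  positivity

theorem small_le {n : ℕ} (Z : Matrix (Fin n) (Fin n) ℝ) (x : Fin n → ℝ) :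
    smallestSingularValue Z ^ 2 * (x ⬝ᵥ x) ≤ (Z *ᵥ x) ⬝ᵥ (Z *ᵥ x) := by
  by_cases hx : x = 0
  · simp [hx]
  have hp := dot_self_pos hx
  set c := √(x ⬝ᵥ x) with hc
  have hc0 : 0 < c := Real.sqrt_pos.2 hp
  have hc2 : c ^ 2 = x ⬝ᵥ x := Real.sq_sqrt hp.le
  have h1 : smallestSingularValue Z ≤ √((Z *ᵥ (c⁻¹ • x)) ⬝ᵥ (Z *ᵥ (c⁻¹ • x))) := by
    rw [small_eq]
    refine csInf_le ⟨0, ?_⟩ ⟨c⁻¹ • x, ?_, rfl⟩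
    · rintro _ ⟨v, _, rfl⟩
      positivity
    · simp only [Set.mem_setOf_eq, smul_dotProduct, dotProduct_smul, smul_eq_mul, ← hc2]
      field_simp
  have h2 := pow_le_pow_left₀ (small_nonneg Z) h1 2
  rw [Real.sq_sqrt (dot_self_nn _), mulVec_smul, smul_dotProduct, dotProduct_smul, smul_eq_mul, smul_eq_mul] at h2
  rw [← hc2]
  calc _ ≤ (c⁻¹ * (c⁻¹ * Z *ᵥ x ⬝ᵥ Z *ᵥ x)) * c ^ 2 := by gcongr
    _ = _ := by field_simp

theorem small_attained {n : ℕ} (hn : 1 ≤ n) (Z : Matrix (Fin n) (Fin n) ℝ) :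
    ∃ v : Fin n → ℝ, v ⬝ᵥ v = 1 ∧ (Z *ᵥ v) ⬝ᵥ (Z *ᵥ v) = smallestSingularValue Z ^ 2 := by
  have hne : {v : Fin n → ℝ | v ⬝ᵥ v = 1}.Nonempty := ⟨_, sph_nonempty ⟨0, hn⟩⟩
  obtain ⟨v, hv, h, _⟩ := (isCompact_sph n).exists_sInf_image_eq_and_le hne
    (f := fun v : Fin n → ℝ => √((Z *ᵥ v) ⬝ᵥ (Z *ᵥ v))) (by fun_prop)
  refine ⟨v, hv, ?_⟩
  rw [small_eq, h, Real.sq_sqrt (dot_self_nn _)]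

theorem dot_cs {n : ℕ} (x y : Fin n → ℝ) : (x ⬝ᵥ y) ^ 2 ≤ (x ⬝ᵥ x) * (y ⬝ᵥ y) := by
  have := Finset.sum_mul_sq_le_sq_mul_sq Finset.univ x y
  simpa [dotProduct, pow_two] using this

theorem small_le_transpose {n : ℕ} (Z : Matrix (Fin n) (Fin n) ℝ) (x : Fin n → ℝ) :
    smallestSingularValue Z ^ 2 * (x ⬝ᵥ x) ≤ (Zᵀ *ᵥ x) ⬝ᵥ (Zᵀ *ᵥ x) := by
  set s := smallestSingularValue Z with hs
  by_cases h0 : s = 0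
  · rw [h0]; simp; exact dot_self_nn _
  have hs2 : 0 < s ^ 2 := by positivity
  have hinj : Function.Injective Z.mulVec := by
    rw [Matrix.mulVec_injective_iff_isUnit, Matrix.isUnit_iff_isUnit_det]
    by_contra hdet
    have : Z.det = 0 := by simpa using hdet
    obtain ⟨v, hv, hv'⟩ := Matrix.exists_mulVec_eq_zero_iff.2 this
    have := small_le Z v
    rw [hv'] at this
    simp only [dotProduct_zero] at this
    have := mul_pos hs2 (dot_self_pos hv)
    linarith
  obtain ⟨y, hy⟩ := (Matrix.mulVec_surjective_iff_isUnit.2 (Matrix.mulVec_injective_iff_isUnit.1 hinj)) x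
  have h1 := small_le Z y
  rw [hy, ← hs] at h1
  have h2 : (Zᵀ *ᵥ x) ⬝ᵥ y = x ⬝ᵥ x := by
    rw [← hy, Matrix.mulVec_transpose, ← Matrix.dotProduct_mulVec]
  have h3 := dot_cs (Zᵀ *ᵥ x) y
  rw [h2] at h3
  set X := x ⬝ᵥ x
  set T := (Zᵀ *ᵥ x) ⬝ᵥ (Zᵀ *ᵥ x)
  have hT : 0 ≤ T := dot_self_nn _
  have hX : 0 ≤ X := dot_self_nn _
  rcases hX.eq_or_lt with h | h
  · rw [← h]; simpa using hT
  have : X * (s ^ 2 * X) ≤ X * T := by nlinarith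
  exact le_of_mul_le_mul_left this h

theorem small_transpose {n : ℕ} (hn : 1 ≤ n) (Z : Matrix (Fin n) (Fin n) ℝ) :
    smallestSingularValue Zᵀ = smallestSingularValue Z := by
  have key : ∀ Z : Matrix (Fin n) (Fin n) ℝ, smallestSingularValue Z ≤ smallestSingularValue Zᵀ := by
    intro Z
    obtain ⟨v, hv, h⟩ := small_attained hn Zᵀ
    have := small_le_transpose Z v
    rw [hv, h, mul_one] at this
    exact (sq_le_sq₀ (small_nonneg _) (small_nonneg _)).1 this
  exact le_antisymm (by simpa using key Zᵀ) (key Z)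

/-- left minimal singular vector -/
def IsMinVec {n : ℕ} (Z : Matrix (Fin n) (Fin n) ℝ) (v : Fin n → ℝ) : Prop :=
  v ⬝ᵥ v = 1 ∧ (Zᵀ *ᵥ v) ⬝ᵥ (Zᵀ *ᵥ v) ≤ smallestSingularValue Z ^ 2

theorem exists_minVec {n : ℕ} (hn : 1 ≤ n) (Z : Matrix (Fin n) (Fin n) ℝ) : ∃ v, IsMinVec Z v := by
  obtain ⟨v, hv, h⟩ := small_attained hn Zᵀ
  exact ⟨v, hv, by rw [h, small_transpose hn]⟩

theorem IsMinVec.eq {n : ℕ} {Z : Matrix (Fin n) (Fin n) ℝ} {v : Fin n → ℝ} (h : IsMinVec Z v) :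
    (Zᵀ *ᵥ v) ⬝ᵥ (Zᵀ *ᵥ v) = smallestSingularValue Z ^ 2 := by
  refine le_antisymm h.2 ?_
  have := small_le_transpose Z v
  rwa [h.1, mul_one] at this

theorem IsMinVec.eigen {n : ℕ} {Z : Matrix (Fin n) (Fin n) ℝ} {v : Fin n → ℝ} (h : IsMinVec Z v) :
    Z *ᵥ (Zᵀ *ᵥ v) = smallestSingularValue Z ^ 2 • v := by
  set s := smallestSingularValue Z
  have hQ := small_le_transpose Z
  set y := Z *ᵥ (Zᵀ *ᵥ v) - s ^ 2 • v with hy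
  have h1 : ∀ t : ℝ, 0 ≤ 2 * t * (y ⬝ᵥ y) + t ^ 2 * ((Zᵀ *ᵥ y) ⬝ᵥ (Zᵀ *ᵥ y) - s ^ 2 * (y ⬝ᵥ y)) := by
    intro t
    have h2 := hQ (v + t • y)
    have h3 : (Zᵀ *ᵥ v) ⬝ᵥ (Zᵀ *ᵥ y) = y ⬝ᵥ y + s ^ 2 * (v ⬝ᵥ y) := by
      have : (Zᵀ *ᵥ v) ⬝ᵥ (Zᵀ *ᵥ y) = (Z *ᵥ (Zᵀ *ᵥ v)) ⬝ᵥ y := by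
        rw [Matrix.dotProduct_mulVec, Matrix.vecMul_transpose]
      rw [this, show Z *ᵥ (Zᵀ *ᵥ v) = y + s ^ 2 • v by rw [hy]; abel, add_dotProduct, smul_dotProduct, smul_eq_mul]
    rw [mulVec_add, mulVec_smul] at h2
    simp only [add_dotProduct, dotProduct_add, smul_dotProduct, dotProduct_smul, smul_eq_mul, h.1, h.eq] at h2
    rw [dotProduct_comm (Zᵀ *ᵥ y) (Zᵀ *ᵥ v), dotProduct_comm y v, h3] at h2
    change s ^ 2 * _ ≤ s ^ 2 + _ + _ at h2
    nlinarith
  have h2 : y ⬝ᵥ y = 0 := by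
    by_contra hne
    have hp : 0 < y ⬝ᵥ y := lt_of_le_of_ne (dot_self_nn _) (Ne.symm hne)
    set Q := (Zᵀ *ᵥ y) ⬝ᵥ (Zᵀ *ᵥ y) - s ^ 2 * (y ⬝ᵥ y) with hQdef
    have hQ0 : 0 ≤ Q := by have := hQ y; rw [hQdef]; linarith
    have h3 := h1 (-(y ⬝ᵥ y) / (Q + 1))
    have h4 : 2 * (-(y ⬝ᵥ y) / (Q + 1)) * (y ⬝ᵥ y) + (-(y ⬝ᵥ y) / (Q + 1)) ^ 2 * Q
        = - ((y ⬝ᵥ y) ^ 2 * (Q + 2) / (Q + 1) ^ 2) := by field_simp; ring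
    rw [h4] at h3
    have : 0 < (y ⬝ᵥ y) ^ 2 * (Q + 2) / (Q + 1) ^ 2 := by positivity
    linarith
  have h3 := dotProduct_self_eq_zero.1 h2
  exact sub_eq_zero.1 h3


theorem rot_dot {n : ℕ} {U : Matrix (Fin n) (Fin n) ℝ} (hU : Uᵀ * U = 1) (x y : Fin n → ℝ) :
    (U *ᵥ x) ⬝ᵥ (U *ᵥ y) = x ⬝ᵥ y := by
  rw [Matrix.dotProduct_mulVec, ← Matrix.mulVec_transpose, Matrix.mulVec_mulVec, hU, Matrix.one_mulVec]

theorem rot_surj {n : ℕ} {U : Matrix (Fin n) (Fin n) ℝ} (hU : Uᵀ * U = 1) (x : Fin n → ℝ) :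
    U *ᵥ (Uᵀ *ᵥ x) = x := by
  rw [Matrix.mulVec_mulVec, mul_eq_one_comm.1 hU, Matrix.one_mulVec]

theorem rot_inj {n : ℕ} {U : Matrix (Fin n) (Fin n) ℝ} (hU : Uᵀ * U = 1) {x y : Fin n → ℝ}
    (h : U *ᵥ x = U *ᵥ y) : x = y := by
  have := congrArg (fun z => Uᵀ *ᵥ z) h
  simpa [Matrix.mulVec_mulVec, hU] using this

theorem spectral {m : ℕ} (B : Matrix (Fin m) (Fin (m + 1)) ℝ) :
    ∃ (U : Matrix (Fin (m + 1)) (Fin (m + 1)) ℝ) (μ : Fin (m + 1) → ℝ) (i0 : Fin (m + 1)),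
      Uᵀ * U = 1 ∧ (∀ x, Bᵀ *ᵥ (B *ᵥ (U *ᵥ x)) = U *ᵥ (μ * x)) ∧ (∀ i, 0 ≤ μ i) ∧ μ i0 = 0 := by
  have hpsd : (Bᵀ * B).PosSemidef := by
    have := Matrix.posSemidef_conjTranspose_mul_self B
    rwa [Matrix.conjTranspose_eq_transpose_of_trivial] at this
  have hH := hpsd.isHermitian
  have hdet : (Bᵀ * B).det = 0 := by
    by_contra h
    have hr := Matrix.rank_of_isUnit (Bᵀ * B) ((Matrix.isUnit_iff_isUnit_det _).2 (isUnit_iff_ne_zero.2 h))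
    have h2 := Matrix.rank_mul_le_right Bᵀ B
    have h3 := Matrix.rank_le_height B
    simp at hr
    omega
  have h0 : ∃ i0, hH.eigenvalues i0 = 0 := by
    have := hH.det_eq_prod_eigenvalues
    rw [hdet] at this
    have h2 := Finset.prod_eq_zero_iff.1 this.symm
    obtain ⟨i, _, hi⟩ := h2
    exact ⟨i, by simpa using hi⟩
  obtain ⟨i0, hi0⟩ := h0
  refine ⟨hH.eigenvectorUnitary, hH.eigenvalues, i0, ?_, ?_, hpsd.eigenvalues_nonneg, hi0⟩
  · have := Unitary.coe_star_mul_self hH.eigenvectorUnitary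
    rwa [Matrix.star_eq_conjTranspose, Matrix.conjTranspose_eq_transpose_of_trivial] at this
  · intro x
    have h1 := hH.spectral_theorem
    have h2 : (Bᵀ * B) * (hH.eigenvectorUnitary : Matrix _ _ ℝ) = (hH.eigenvectorUnitary : Matrix _ _ ℝ) * diagonal (hH.eigenvalues) := by
      refine (congrArg (fun X => X * (hH.eigenvectorUnitary : Matrix _ _ ℝ)) h1).trans ?_
      simp only [Unitary.conjStarAlgAut_apply]
      rw [mul_assoc, Unitary.coe_star_mul_self, mul_one]
      rfl
    rw [mulVec_mulVec, mulVec_mulVec, h2, ← mulVec_mulVec]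
    congr 1
    ext i
    simp [Matrix.mulVec_diagonal]

abbrev consM {m : ℕ} (a : Fin (m + 1) → ℝ) (B : Matrix (Fin m) (Fin (m + 1)) ℝ) :
    Matrix (Fin (m + 1)) (Fin (m + 1)) ℝ := Matrix.of (Fin.cons a B : Fin (m + 1) → Fin (m + 1) → ℝ)

theorem consM_zero {m : ℕ} (a : Fin (m + 1) → ℝ) (B : Matrix (Fin m) (Fin (m + 1)) ℝ) (x : Fin (m + 1) → ℝ) :
    (consM a B *ᵥ x) 0 = a ⬝ᵥ x := rfl

theorem consM_succ {m : ℕ} (a : Fin (m + 1) → ℝ) (B : Matrix (Fin m) (Fin (m + 1)) ℝ) (x : Fin (m + 1) → ℝ) (i : Fin m) :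
    (consM a B *ᵥ x) i.succ = (B *ᵥ x) i := rfl

theorem consM_tr {m : ℕ} (a : Fin (m + 1) → ℝ) (B : Matrix (Fin m) (Fin (m + 1)) ℝ) (v : Fin (m + 1) → ℝ) :
    (consM a B)ᵀ *ᵥ v = v 0 • a + Bᵀ *ᵥ (fun i => v i.succ) := by
  ext j
  simp only [Matrix.mulVec, dotProduct, Fin.sum_univ_succ, Pi.add_apply, Pi.smul_apply, smul_eq_mul,
    transpose_apply, Matrix.of_apply, Fin.cons_zero, Fin.cons_succ]
  rw [mul_comm]
  rfl

theorem key_det {m : ℕ} (B : Matrix (Fin m) (Fin (m + 1)) ℝ) (U : Matrix (Fin (m + 1)) (Fin (m + 1)) ℝ)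
    (μ : Fin (m + 1) → ℝ) (i0 : Fin (m + 1))
    (hU : Uᵀ * U = 1) (hS : ∀ x, Bᵀ *ᵥ (B *ᵥ (U *ᵥ x)) = U *ᵥ (μ * x)) (h0 : μ i0 = 0)
    (a : Fin (m + 1) → ℝ) (ha : ∀ i, a i ≠ 0) (v : Fin (m + 1) → ℝ) (s : ℝ)
    (hs : s = smallestSingularValue (consM (U *ᵥ a) B))
    (hv : IsMinVec (consM (U *ᵥ a) B) v) (hv0 : v 0 ≠ 0) :
    0 < s ∧ (∀ i, i ≠ i0 → s ^ 2 < μ i) ∧ ∑ i, a i ^ 2 / (μ i - s ^ 2) = -1 ∧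
      v 0 ^ 2 * s ^ 2 * ∑ i, a i ^ 2 / (μ i - s ^ 2) ^ 2 = 1 := by
  have hs0 : 0 ≤ s := hs ▸ small_nonneg _
  have heig := hv.eigen
  have hnorm := hv.eq
  rw [← hs] at heig hnorm
  set u := (consM (U *ᵥ a) B)ᵀ *ᵥ v with hu
  rw [consM_tr] at hu
  obtain ⟨u', hu'⟩ : ∃ u', u = U *ᵥ u' := ⟨Uᵀ *ᵥ u, (rot_surj hU u).symm⟩
  have e0 : a ⬝ᵥ u' = s ^ 2 * v 0 := by
    have := congrFun heig 0
    rw [consM_zero, hu', rot_dot hU] at this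
    exact this
  have e1 : B *ᵥ u = s ^ 2 • (fun i => v i.succ) := by
    ext i
    exact congrFun heig i.succ
  have e2 : U *ᵥ (μ * u') = U *ᵥ (s ^ 2 • (u' - v 0 • a)) := by
    rw [← hS, ← hu', e1, mulVec_smul, mulVec_smul, mulVec_sub, mulVec_smul, ← hu', hu]
    congr 1
    abel
  have e3 : ∀ i, u' i * (μ i - s ^ 2) = - (s ^ 2 * v 0 * a i) := by
    intro i
    have := congrFun (rot_inj hU e2) i
    simp only [Pi.mul_apply, Pi.smul_apply, Pi.sub_apply, smul_eq_mul] at this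
    linarith
  have e4 : u' ⬝ᵥ u' = s ^ 2 := by rw [← rot_dot hU, ← hu', hnorm]
  have hspos : 0 < s := by
    rcases hs0.eq_or_lt with h | h
    · exfalso
      have hu0 : u' = 0 := dotProduct_self_eq_zero.1 (by rw [e4, ← h]; simp)
      set e : Fin (m + 1) → ℝ := U *ᵥ Pi.single i0 1 with he
      have hBe : B *ᵥ e = 0 := by
        apply dotProduct_self_eq_zero.1
        have : (B *ᵥ e) ⬝ᵥ (B *ᵥ e) = e ⬝ᵥ (Bᵀ *ᵥ (B *ᵥ e)) := by
          rw [Matrix.dotProduct_mulVec e, Matrix.vecMul_transpose]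
        rw [this, he, hS, rot_dot hU]
        simp [h0]
      have h1 : e ⬝ᵥ u = 0 := by rw [hu', hu0]; simp
      rw [hu, dotProduct_add, dotProduct_smul, he, rot_dot hU, ← he, Matrix.dotProduct_mulVec, Matrix.vecMul_transpose, hBe] at h1
      simp [hv0, ha] at h1
    · exact h
  have hne : ∀ i, μ i - s ^ 2 ≠ 0 := by
    intro i hi
    have := e3 i
    rw [hi, mul_zero] at this
    have : s ^ 2 * v 0 * a i ≠ 0 := by
      have := ha i
      positivity
    simp_all
  have e5 : ∀ i, u' i = - (s ^ 2 * v 0) * (a i / (μ i - s ^ 2)) := by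
    intro i
    have h2 := hne i
    field_simp
    linarith [e3 i]
  refine ⟨hspos, ?_, ?_, ?_⟩
  · intro i hi
    by_contra hlt
    have hlt : μ i < s ^ 2 := lt_of_le_of_ne (not_lt.1 hlt) (fun h => hne i (by linarith))
    set x : Fin (m + 1) → ℝ := a i • Pi.single i0 1 - a i0 • Pi.single i 1 with hx
    have h1 := small_le (consM (U *ᵥ a) B) (U *ᵥ x)
    rw [← hs, rot_dot hU] at h1
    have h2 : (consM (U *ᵥ a) B *ᵥ U *ᵥ x) ⬝ᵥ (consM (U *ᵥ a) B *ᵥ U *ᵥ x) = (a ⬝ᵥ x) ^ 2 + x ⬝ᵥ (μ * x) := by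
      have : (B *ᵥ (U *ᵥ x)) ⬝ᵥ (B *ᵥ (U *ᵥ x)) = x ⬝ᵥ (μ * x) := by
        rw [← rot_dot hU, ← hS, Matrix.dotProduct_mulVec (U *ᵥ x), Matrix.vecMul_transpose]
      rw [← this]
      conv_lhs => rw [dotProduct, Fin.sum_univ_succ]
      simp only [consM_zero, consM_succ, rot_dot hU]
      rw [pow_two]; rfl
    rw [h2] at h1
    have h3 : a ⬝ᵥ x = 0 := by
      rw [hx]; simp [dotProduct_sub]; ring
    have h4 : x ⬝ᵥ x = a i ^ 2 + a i0 ^ 2 := by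
      rw [hx]; simp [dotProduct_sub, sub_dotProduct, Pi.single_apply, hi, hi.symm]; ring
    have h5 : x ⬝ᵥ (μ * x) = μ i * a i0 ^ 2 := by
      rw [hx]; simp [dotProduct_sub, sub_dotProduct, Pi.single_apply, hi, hi.symm, h0]; ring
    rw [h3, h4, h5] at h1
    have := ha i
    have := ha i0
    have h6 : 0 < a i ^ 2 := by positivity
    have h7 : 0 < a i0 ^ 2 := by positivity
    nlinarith
  · have : s ^ 2 * v 0 * (∑ i, a i ^ 2 / (μ i - s ^ 2)) = s ^ 2 * v 0 * (-1) := by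
      rw [mul_neg_one]
      conv_rhs => rw [← e0, dotProduct]
      rw [Finset.mul_sum, ← Finset.sum_neg_distrib]
      refine Finset.sum_congr rfl fun i _ => ?_
      rw [e5]; field_simp [hne i]
    exact mul_left_cancel₀ (by positivity) this
  · have : s ^ 2 * (v 0 ^ 2 * s ^ 2 * ∑ i, a i ^ 2 / (μ i - s ^ 2) ^ 2) = s ^ 2 * 1 := by
      rw [mul_one]
      conv_rhs => rw [← e4, dotProduct]
      rw [Finset.mul_sum, Finset.mul_sum]
      refine Finset.sum_congr rfl fun i _ => ?_
      rw [e5]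
      have := hne i
      field_simp
    exact mul_left_cancel₀ (by positivity) this

/-- restated after splitting off the kernel coordinate -/
theorem key_det' {m : ℕ} (B : Matrix (Fin m) (Fin (m + 1)) ℝ) (U : Matrix (Fin (m + 1)) (Fin (m + 1)) ℝ)
    (μ : Fin (m + 1) → ℝ) (i0 : Fin (m + 1))
    (hU : Uᵀ * U = 1) (hS : ∀ x, Bᵀ *ᵥ (B *ᵥ (U *ᵥ x)) = U *ᵥ (μ * x)) (h0 : μ i0 = 0)
    (x : ℝ) (w : Fin m → ℝ) (hx : x ≠ 0) (hw : ∀ i, w i ≠ 0) (v : Fin (m + 1) → ℝ) (s : ℝ)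
    (hs : s = smallestSingularValue (consM (U *ᵥ (i0.insertNth x w)) B))
    (hv : IsMinVec (consM (U *ᵥ (i0.insertNth x w)) B) v) (hv0 : v 0 ≠ 0) :
    0 < s ∧ (∀ j, s ^ 2 < μ (i0.succAbove j)) ∧
      |x| = s * √(1 + ∑ j, w j ^ 2 / (μ (i0.succAbove j) - s ^ 2)) ∧
      |v 0| = (√(1 + ∑ j, w j ^ 2 * μ (i0.succAbove j) / (μ (i0.succAbove j) - s ^ 2) ^ 2))⁻¹ := by
  have ha : ∀ i, (i0.insertNth x w : Fin (m + 1) → ℝ) i ≠ 0 := by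
    intro i
    refine Fin.succAboveCases i0 ?_ ?_ i
    · simpa using hx
    · intro j; simpa using hw j
  obtain ⟨h1, h2, h3, h4⟩ := key_det B U μ i0 hU hS h0 _ ha v s hs hv hv0
  have h2' : ∀ j, s ^ 2 < μ (i0.succAbove j) := fun j => h2 _ (Fin.succAbove_ne _ _)
  rw [Fin.sum_univ_succAbove _ i0] at h3 h4
  simp only [Fin.insertNth_apply_same, Fin.insertNth_apply_succAbove, h0, zero_sub] at h3 h4
  set M := ∑ j, w j ^ 2 / (μ (i0.succAbove j) - s ^ 2) with hM
  have hx2 : x ^ 2 = s ^ 2 * (1 + M) := by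
    have : x ^ 2 / -s ^ 2 = -1 - M := by linarith
    field_simp at this
    linarith
  refine ⟨h1, h2', ?_, ?_⟩
  · rw [← Real.sqrt_sq_eq_abs, hx2, Real.sqrt_mul (by positivity), Real.sqrt_sq h1.le]
  · have hN : s ^ 2 * (x ^ 2 / (-s ^ 2) ^ 2 + ∑ j, w j ^ 2 / (μ (i0.succAbove j) - s ^ 2) ^ 2)
        = 1 + ∑ j, w j ^ 2 * μ (i0.succAbove j) / (μ (i0.succAbove j) - s ^ 2) ^ 2 := by
      rw [hx2, mul_add, show s ^ 2 * (s ^ 2 * (1 + M) / (-s ^ 2) ^ 2) = 1 + M by field_simp, hM, add_assoc,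
        Finset.mul_sum, ← Finset.sum_add_distrib]
      congr 1
      refine Finset.sum_congr rfl fun j _ => ?_
      have : μ (i0.succAbove j) - s ^ 2 ≠ 0 := by linarith [h2' j]
      field_simp
      ring
    rw [← hN]
    have h5 : v 0 ^ 2 = (s ^ 2 * (x ^ 2 / (-s ^ 2) ^ 2 + ∑ j, w j ^ 2 / (μ (i0.succAbove j) - s ^ 2) ^ 2))⁻¹ := by
      apply eq_inv_of_mul_eq_one_left
      linarith
    rw [← Real.sqrt_sq_eq_abs, h5, Real.sqrt_inv]


/-- sup of `|⟨v, r⟩|` over unit left-singular vectors for the least singular value -/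
noncomputable def WW {n : ℕ} (Z : Fin n → Fin n → ℝ) (r : Fin n → ℝ) : ENNReal :=
  ⨆ v, ⨆ (_ : IsMinVec (Matrix.of Z) v), ENNReal.ofReal |v ⬝ᵥ r|

theorem WW_closed {n : ℕ} : IsClosed {q : ((Fin n → Fin n → ℝ) × (Fin n → ℝ)) × (Fin n → ℝ) |
    IsMinVec (Matrix.of q.1.1) q.2} := by
  have h1 : Continuous fun q : ((Fin n → Fin n → ℝ) × (Fin n → ℝ)) × (Fin n → ℝ) =>
      (Matrix.of q.1.1)ᵀ *ᵥ q.2 := by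
    refine Continuous.matrix_mulVec ?_ continuous_snd
    refine Continuous.matrix_transpose ?_
    exact continuous_fst.comp continuous_fst
  refine IsClosed.and (isClosed_eq (by fun_prop) continuous_const) (isClosed_le (h1.dotProduct h1) ?_)
  exact ((small_cont n).comp (continuous_fst.comp continuous_fst)).pow 2

theorem WW_attained {n : ℕ} (hn : 1 ≤ n) (Z : Fin n → Fin n → ℝ) (r : Fin n → ℝ) :
    ∃ v, IsMinVec (Matrix.of Z) v ∧ WW Z r = ENNReal.ofReal |v ⬝ᵥ r| := by
  have hc : IsCompact {v | IsMinVec (Matrix.of Z) v} := by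
    refine (isCompact_sph n).of_isClosed_subset ?_ (fun v hv => hv.1)
    exact WW_closed.preimage (f := fun v => ((Z, r), v)) (by fun_prop)
  obtain ⟨v, hv, hmax⟩ := hc.exists_isMaxOn (exists_minVec hn (Matrix.of Z))
    (f := fun v => ENNReal.ofReal |v ⬝ᵥ r|) (by
      apply Continuous.continuousOn
      exact ENNReal.continuous_ofReal.comp (by fun_prop))
  refine ⟨v, hv, le_antisymm ?_ ?_⟩
  · exact iSup₂_le fun u hu => hmax hu
  · exact le_iSup₂_of_le v hv le_rfl

theorem WW_meas {n : ℕ} (hn : 1 ≤ n) :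
    Measurable fun p : (Fin n → Fin n → ℝ) × (Fin n → ℝ) => WW p.1 p.2 := by
  refine measurable_of_Ici fun c => ?_
  apply IsClosed.measurableSet
  haveI : CompactSpace {v : Fin n → ℝ | v ⬝ᵥ v = 1} := isCompact_iff_compactSpace.1 (isCompact_sph n)
  let T : Set (((Fin n → Fin n → ℝ) × (Fin n → ℝ)) × {v : Fin n → ℝ | v ⬝ᵥ v = 1}) :=
    {q | IsMinVec (Matrix.of q.1.1) (q.2 : Fin n → ℝ) ∧ c ≤ ENNReal.ofReal |(q.2 : Fin n → ℝ) ⬝ᵥ q.1.2|}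
  have hT : IsClosed T := by
    refine IsClosed.and ?_ ?_
    · exact WW_closed.preimage (f := fun q : ((Fin n → Fin n → ℝ) × (Fin n → ℝ)) × {v : Fin n → ℝ | v ⬝ᵥ v = 1} =>
        (q.1, (q.2 : Fin n → ℝ))) (by fun_prop)
    · refine isClosed_le continuous_const (ENNReal.continuous_ofReal.comp ?_)
      have : Continuous fun q : ((Fin n → Fin n → ℝ) × (Fin n → ℝ)) × {v : Fin n → ℝ | v ⬝ᵥ v = 1} =>
        (q.2 : Fin n → ℝ) ⬝ᵥ q.1.2 := Continuous.dotProduct (by fun_prop) (by fun_prop)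
      exact this.abs
  convert isClosedMap_fst_of_compactSpace T hT using 1
  ext ⟨Z, r⟩
  simp only [Set.mem_preimage, Set.mem_Ici, Set.mem_image]
  constructor
  · intro h
    obtain ⟨v, hv, h'⟩ := WW_attained hn Z r
    exact ⟨((Z, r), ⟨v, hv.1⟩), ⟨hv, h' ▸ h⟩, rfl⟩
  · rintro ⟨⟨⟨Z', r'⟩, v⟩, ⟨h1, h2⟩, h3⟩
    simp only [Prod.mk.injEq] at h3
    obtain ⟨rfl, rfl⟩ := h3
    exact h2.trans (le_iSup₂_of_le (v : Fin n → ℝ) h1 le_rfl)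

theorem small_rot {n : ℕ} {U : Matrix (Fin n) (Fin n) ℝ} (hU : Uᵀ * U = 1) (Z : Matrix (Fin n) (Fin n) ℝ) :
    smallestSingularValue (U * Z) = smallestSingularValue Z := by
  simp only [small_eq, ← mulVec_mulVec, rot_dot hU]

theorem minVec_rot {n : ℕ} {U : Matrix (Fin n) (Fin n) ℝ} (hU : Uᵀ * U = 1) (Z : Matrix (Fin n) (Fin n) ℝ)
    (v : Fin n → ℝ) : IsMinVec (U * Z) (U *ᵥ v) ↔ IsMinVec Z v := by
  unfold IsMinVec
  rw [small_rot hU, rot_dot hU, transpose_mul, mulVec_mulVec, mul_assoc, hU, mul_one]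

theorem WW_rot {n : ℕ} {U : Matrix (Fin n) (Fin n) ℝ} (hU : Uᵀ * U = 1) (Z : Fin n → Fin n → ℝ)
    (r : Fin n → ℝ) : WW (fun i j => (U * Matrix.of Z) i j) (U *ᵥ r) = WW Z r := by
  have e : Matrix.of (fun i j => (U * Matrix.of Z) i j) = U * Matrix.of Z := rfl
  unfold WW
  rw [e]
  apply le_antisymm
  · refine iSup₂_le fun v hv => ?_
    rw [← rot_surj hU v] at hv ⊢
    rw [minVec_rot hU] at hv
    rw [rot_dot hU]
    exact le_iSup₂_of_le _ hv le_rfl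
  · refine iSup₂_le fun v hv => ?_
    rw [← rot_dot hU]
    exact le_iSup₂_of_le (U *ᵥ v) ((minVec_rot hU _ _).2 hv) le_rfl

theorem WW_smul {n : ℕ} (Z : Fin n → Fin n → ℝ) (r : Fin n → ℝ) (c : ℝ) :
    WW Z (c • r) = ENNReal.ofReal |c| * WW Z r := by
  unfold WW
  simp only [ENNReal.mul_iSup, dotProduct_smul, smul_eq_mul, abs_mul, ENNReal.ofReal_mul (abs_nonneg c)]

/-- Householder-type orthogonal matrix taking a unit vector to another. -/
theorem exists_rot {n : ℕ} (v e : Fin n → ℝ) (hv : v ⬝ᵥ v = 1) (he : e ⬝ᵥ e = 1) :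
    ∃ U : Matrix (Fin n) (Fin n) ℝ, Uᵀ * U = 1 ∧ U *ᵥ e = v := by
  by_cases hne : e = v
  · exact ⟨1, by simp, by simp [hne]⟩
  set w := e - v with hw
  have hw0 : 0 < w ⬝ᵥ w := dot_self_pos (sub_ne_zero.2 hne)
  set c := 2 / (w ⬝ᵥ w) with hc
  have hcw : c * (w ⬝ᵥ w) = 2 := by rw [hc]; field_simp
  refine ⟨1 - c • vecMulVec w w, ?_, ?_⟩
  · have ht : (1 - c • vecMulVec w w)ᵀ = 1 - c • vecMulVec w w := by
      ext i j
      simp [vecMulVec_apply, Matrix.one_apply, mul_comm, eq_comm]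
    rw [ht]
    have h2 : vecMulVec w w * vecMulVec w w = (w ⬝ᵥ w) • vecMulVec w w := by
      rw [vecMulVec_mul_vecMulVec]
      ext i j; simp [vecMulVec_apply]; ring
    rw [sub_mul, mul_sub, mul_sub, one_mul, mul_one, one_mul, smul_mul_smul_comm, h2, smul_smul,
      mul_assoc, hcw, mul_comm c 2]
    module
  · have h1 : w ⬝ᵥ e = (w ⬝ᵥ w) / 2 := by
      rw [hw]
      simp only [sub_dotProduct, dotProduct_sub, hv, he, dotProduct_comm e v]
      ring
    ext i
    rw [sub_mulVec, one_mulVec, smul_mulVec, vecMulVec_mulVec, h1]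
    simp only [Pi.sub_apply, Pi.smul_apply, smul_eq_mul, MulOpposite.smul_eq_mul_unop, MulOpposite.unop_op]
    have : c * (w i * (w ⬝ᵥ w / 2)) = w i := by linear_combination (w i / 2) * hcw
    rw [this, hw]; simp


section psi
variable {m : ℕ} (ν w : Fin m → ℝ)

noncomputable def fM (σ : ℝ) : ℝ := 1 + ∑ j, w j ^ 2 / (ν j - σ ^ 2)
noncomputable def fN (σ : ℝ) : ℝ := 1 + ∑ j, w j ^ 2 * ν j / (ν j - σ ^ 2) ^ 2
noncomputable def fpsi (σ : ℝ) : ℝ := σ * √(fM ν w σ)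
def setI (s : ℝ) : Set ℝ := {σ | 0 < σ ∧ σ ≤ s ∧ ∀ j, σ ^ 2 < ν j}
noncomputable def fC (σ : ℝ) : ℝ := ∏ j, √(ν j / (ν j - σ ^ 2))

theorem fM_ge {s σ : ℝ} (h : σ ∈ setI ν s) : 1 ≤ fM ν w σ := by
  unfold fM
  have : 0 ≤ ∑ j, w j ^ 2 / (ν j - σ ^ 2) :=
    Finset.sum_nonneg fun j _ => div_nonneg (sq_nonneg _) (sub_nonneg.2 (h.2.2 j).le)
  linarith

theorem fN_ge {s σ : ℝ} (h : σ ∈ setI ν s) : 1 ≤ fN ν w σ := by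
  unfold fN
  have : 0 ≤ ∑ j, w j ^ 2 * ν j / (ν j - σ ^ 2) ^ 2 :=
    Finset.sum_nonneg fun j _ => div_nonneg (mul_nonneg (sq_nonneg _) ((sq_nonneg σ).trans (h.2.2 j).le)) (sq_nonneg _)
  linarith

theorem fpsi_deriv {s σ : ℝ} (h : σ ∈ setI ν s) :
    HasDerivAt (fpsi ν w) (fN ν w σ / √(fM ν w σ)) σ := by
  have hM := fM_ge ν w h
  have hd : ∀ j, ν j - σ ^ 2 ≠ 0 := fun j => (sub_pos.2 (h.2.2 j)).ne'
  have h1 : HasDerivAt (fM ν w) (∑ j, w j ^ 2 * (2 * σ) / (ν j - σ ^ 2) ^ 2) σ := by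
    unfold fM
    refine HasDerivAt.const_add _ ?_
    refine HasDerivAt.fun_sum fun j _ => ?_
    have h2 : HasDerivAt (fun σ : ℝ => ν j - σ ^ 2) (-(2 * σ)) σ := by
      simpa using (hasDerivAt_pow 2 σ).const_sub (ν j)
    have h4 := (h2.fun_inv (hd j)).const_mul (w j ^ 2)
    simp only [← div_eq_mul_inv] at h4
    exact h4.congr_deriv (by ring)
  have h3 := (hasDerivAt_id σ).mul (h1.sqrt (by linarith))
  refine h3.congr_deriv ?_
  simp only [id]
  have hs : 0 < √(fM ν w σ) := Real.sqrt_pos.2 (by linarith)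
  have hss : √(fM ν w σ) * √(fM ν w σ) = fM ν w σ := Real.mul_self_sqrt (by linarith)
  rw [eq_div_iff hs.ne', add_mul, one_mul, hss]
  have : σ * ((∑ j, w j ^ 2 * (2 * σ) / (ν j - σ ^ 2) ^ 2) / (2 * √(fM ν w σ))) * √(fM ν w σ)
      = ∑ j, σ ^ 2 * w j ^ 2 / (ν j - σ ^ 2) ^ 2 := by
    have e : ∑ j, w j ^ 2 * (2 * σ) / (ν j - σ ^ 2) ^ 2 = (2 * σ) * ∑ j, w j ^ 2 / (ν j - σ ^ 2) ^ 2 := by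
      rw [Finset.mul_sum]; exact Finset.sum_congr rfl fun j _ => by ring
    have e2 : ∑ j, σ ^ 2 * w j ^ 2 / (ν j - σ ^ 2) ^ 2 = σ ^ 2 * ∑ j, w j ^ 2 / (ν j - σ ^ 2) ^ 2 := by
      rw [Finset.mul_sum]; exact Finset.sum_congr rfl fun j _ => by ring
    rw [e, e2]; field_simp
  rw [this]
  unfold fM fN
  rw [add_assoc, ← Finset.sum_add_distrib]
  congr 1
  refine Finset.sum_congr rfl fun j _ => ?_
  have := hd j
  field_simp
  ring

theorem fpsi_mono (s : ℝ) : StrictMonoOn (fpsi ν w) (setI ν s) := by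
  intro a ha b hb hab
  unfold fpsi
  have h1 : fM ν w a ≤ fM ν w b := by
    unfold fM
    gcongr with j _
    · exact sub_pos.2 (hb.2.2 j)
    · exact ha.1.le
  have h2 : 0 < √(fM ν w b) := Real.sqrt_pos.2 (by linarith [fM_ge ν w hb])
  calc a * √(fM ν w a) ≤ a * √(fM ν w b) := by
        have := ha.1.le; gcongr
    _ < _ := by gcongr

theorem setI_meas (s : ℝ) : MeasurableSet (setI ν s) := by
  have : setI ν s = Set.Ioc 0 s ∩ ⋂ j, {σ | σ ^ 2 < ν j} := by
    ext σ; simp [setI, and_assoc]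
  rw [this]
  exact measurableSet_Ioc.inter (MeasurableSet.iInter fun j => measurableSet_lt (by fun_prop) (by fun_prop))

theorem fNM_le {s σ : ℝ} (h : σ ∈ setI ν s) : √(fN ν w σ) / √(fM ν w σ) ≤ fC ν σ := by
  have hM := fM_ge ν w h
  have hd : ∀ j, 0 < ν j - σ ^ 2 := fun j => (sub_pos.2 (h.2.2 j))
  have hν : ∀ j, 0 < ν j := fun j => by nlinarith [h.2.2 j, sq_nonneg σ]
  have hf : ∀ j, 1 ≤ ν j / (ν j - σ ^ 2) := fun j => by
    rw [one_le_div (hd j)]; nlinarith [sq_nonneg σ]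
  have hP0 : ∀ t : Finset (Fin m), 1 ≤ ∏ j ∈ t, ν j / (ν j - σ ^ 2) := fun t =>
    Finset.prod_induction _ (fun x => 1 ≤ x) (fun a b ha hb => one_le_mul_of_one_le_of_one_le ha hb)
      le_rfl (fun i _ => hf i)
  have hP : ∀ j, ν j / (ν j - σ ^ 2) ≤ ∏ j, ν j / (ν j - σ ^ 2) := fun j => by
    rw [← Finset.mul_prod_erase _ _ (Finset.mem_univ j)]
    exact le_mul_of_one_le_right (by linarith [hf j]) (hP0 _)
  have hP1 : 1 ≤ ∏ j, ν j / (ν j - σ ^ 2) := hP0 _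
  have e : fC ν σ = √(∏ j, ν j / (ν j - σ ^ 2)) := by
    unfold fC
    rw [Real.sqrt_prod]
    intro j _; exact (div_pos (hν j) (hd j)).le
  rw [e, div_le_iff₀ (Real.sqrt_pos.2 (by linarith)), ← Real.sqrt_mul (by linarith)]
  apply Real.sqrt_le_sqrt
  unfold fN fM
  rw [mul_add, Finset.mul_sum, mul_one]
  gcongr with j _
  calc w j ^ 2 * ν j / (ν j - σ ^ 2) ^ 2 = ν j / (ν j - σ ^ 2) * (w j ^ 2 / (ν j - σ ^ 2)) := by
        have := (hd j).ne'; field_simp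
    _ ≤ _ := by
        have := hP j
        have := (hd j).le
        gcongr

noncomputable def fE (σ : ℝ) : ℝ := fC ν σ * (√(2 * π))⁻¹ * ∏ j, rexp (-(σ ^ 2 / (ν j - σ ^ 2)) * w j ^ 2 / 2)

theorem pdf_psi {s σ : ℝ} (h : σ ∈ setI ν s) :
    gaussianPDFReal 0 1 (fpsi ν w σ) ≤ (√(2 * π))⁻¹ * ∏ j, rexp (-(σ ^ 2 / (ν j - σ ^ 2)) * w j ^ 2 / 2) := by
  rw [gaussianPDFReal, ← Real.exp_sum]
  simp only [NNReal.coe_one, mul_one, sub_zero]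
  gcongr
  unfold fpsi
  rw [mul_pow, Real.sq_sqrt (by linarith [fM_ge ν w h])]
  unfold fM
  rw [mul_add, Finset.mul_sum, ← Finset.sum_div]
  have : ∑ j, -(σ ^ 2 / (ν j - σ ^ 2)) * w j ^ 2 = - ∑ j, σ ^ 2 * (w j ^ 2 / (ν j - σ ^ 2)) := by
    rw [← Finset.sum_neg_distrib]; exact Finset.sum_congr rfl fun j _ => by ring
  rw [this]
  have := sq_nonneg σ
  gcongr
  linarith

theorem E1_half (s ε : ℝ) (hε : ε = 1 ∨ ε = -1) (h : ℝ → ENNReal)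
    (hh : ∀ σ ∈ setI ν s, h (ε * fpsi ν w σ) ≤ ENNReal.ofReal (√(fN ν w σ))⁻¹) :
    ∫⁻ x in (fun σ => ε * fpsi ν w σ) '' setI ν s, gaussianPDF 0 1 x * h x ≤
      ∫⁻ σ in setI ν s, ENNReal.ofReal (fE ν w σ) := by
  have hε2 : |ε| = 1 := by rcases hε with rfl | rfl <;> simp
  have hε0 : ε ≠ 0 := by rcases hε with rfl | rfl <;> simp
  rw [lintegral_image_eq_lintegral_abs_deriv_mul (setI_meas ν s)
    (f' := fun σ => ε * (fN ν w σ / √(fM ν w σ)))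
    (fun σ hσ => ((fpsi_deriv ν w hσ).const_mul ε).hasDerivWithinAt)
    (fun a ha b hb hab => (fpsi_mono ν w s).injOn ha hb (mul_left_cancel₀ hε0 hab))]
  refine setLIntegral_mono' (setI_meas ν s) fun σ hσ => ?_
  have hN := fN_ge ν w hσ
  have hM := fM_ge ν w hσ
  rw [abs_mul, hε2, one_mul]
  refine (mul_le_mul_right (mul_le_mul_right (hh σ hσ) _) _).trans ?_
  have hpe : gaussianPDF 0 1 (ε * fpsi ν w σ) = ENNReal.ofReal (gaussianPDFReal 0 1 (fpsi ν w σ)) := by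
    rw [gaussianPDF]
    congr 1
    rcases hε with rfl | rfl <;> simp [gaussianPDFReal]
  rw [hpe, ← ENNReal.ofReal_mul (gaussianPDFReal_nonneg _ _ _), ← ENNReal.ofReal_mul (abs_nonneg _)]
  apply ENNReal.ofReal_le_ofReal
  have hsN : 0 < √(fN ν w σ) := Real.sqrt_pos.2 (by linarith)
  have hsM : 0 < √(fM ν w σ) := Real.sqrt_pos.2 (by linarith)
  rw [abs_of_nonneg (div_nonneg (by linarith) hsM.le)]
  have e : fN ν w σ / √(fM ν w σ) * (gaussianPDFReal 0 1 (fpsi ν w σ) * (√(fN ν w σ))⁻¹)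
      = (√(fN ν w σ) / √(fM ν w σ)) * gaussianPDFReal 0 1 (fpsi ν w σ) := by
    have := Real.mul_self_sqrt (show 0 ≤ fN ν w σ by linarith)
    nth_rw 1 [← this]
    field_simp
  rw [e]
  unfold fE
  rw [mul_assoc]
  refine mul_le_mul (fNM_le ν w hσ) (pdf_psi ν w hσ) (gaussianPDFReal_nonneg _ _ _) ?_
  exact Finset.prod_nonneg fun j _ => Real.sqrt_nonneg _

theorem E1 (s : ℝ) (h : ℝ → ENNReal)
    (hh : ∀ x, x ≠ 0 → h x ≠ 0 → ∃ σ ∈ setI ν s, |x| = fpsi ν w σ ∧ h x ≤ ENNReal.ofReal (√(fN ν w σ))⁻¹) :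
    ∫⁻ x, h x ∂(gaussianReal 0 1) ≤ 2 * ∫⁻ σ in setI ν s, ENNReal.ofReal (fE ν w σ) := by
  have hpos : ∀ σ ∈ setI ν s, 0 < fpsi ν w σ := fun σ hσ =>
    mul_pos hσ.1 (Real.sqrt_pos.2 (by linarith [fM_ge ν w hσ]))
  have hin : ∀ ε : ℝ, (ε = 1 ∨ ε = -1) →
      ∀ σ ∈ setI ν s, h (ε * fpsi ν w σ) ≤ ENNReal.ofReal (√(fN ν w σ))⁻¹ := by
    intro ε hε σ hσ
    have hε2 : |ε| = 1 := by rcases hε with rfl | rfl <;> simp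
    have hε0 : ε ≠ 0 := by rcases hε with rfl | rfl <;> simp
    by_cases h0 : h (ε * fpsi ν w σ) = 0
    · rw [h0]; exact zero_le
    · obtain ⟨τ, hτ, h1, h2⟩ := hh _ (mul_ne_zero hε0 (hpos σ hσ).ne') h0
      rw [abs_mul, hε2, one_mul, abs_of_pos (hpos σ hσ)] at h1
      obtain rfl := (fpsi_mono ν w s).injOn hσ hτ h1
      exact h2
  rw [gaussianReal_of_var_ne_zero _ one_ne_zero]
  refine (lintegral_withDensity_le_lintegral_mul _ (measurable_gaussianPDF _ _) h).trans ?_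
  set S1 := (fun σ => (1:ℝ) * fpsi ν w σ) '' setI ν s
  set S2 := (fun σ => (-1:ℝ) * fpsi ν w σ) '' setI ν s
  have hsupp : ∀ x, x ∉ S1 ∪ S2 → x ≠ 0 → (gaussianPDF 0 1 * h) x = 0 := by
    intro x hx hx0
    by_contra hne
    have : h x ≠ 0 := fun h' => hne (by simp [h'])
    obtain ⟨σ, hσ, h1, _⟩ := hh x hx0 this
    apply hx
    rcases abs_choice x with h' | h'
    · left; exact ⟨σ, hσ, by simp only; rw [← h1, h']; ring⟩
    · right; exact ⟨σ, hσ, by simp only; rw [← h1, h']; ring⟩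
  have hms : ∀ ε : ℝ, (ε = 1 ∨ ε = -1) → MeasurableSet ((fun σ => ε * fpsi ν w σ) '' setI ν s) := by
    intro ε hε
    have hε0 : ε ≠ 0 := by rcases hε with rfl | rfl <;> simp
    refine (setI_meas ν s).image_of_continuousOn_injOn ?_ ?_
    · exact fun σ hσ => ((fpsi_deriv ν w hσ).const_mul ε).continuousAt.continuousWithinAt
    · exact (fun a ha b hb hab => (fpsi_mono ν w s).injOn ha hb (mul_left_cancel₀ hε0 hab))
  calc ∫⁻ x, (gaussianPDF 0 1 * h) x ≤ ∫⁻ x in S1 ∪ S2, (gaussianPDF 0 1 * h) x := by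
        rw [← lintegral_indicator ((hms 1 (Or.inl rfl)).union (hms (-1) (Or.inr rfl)))]
        apply lintegral_mono_ae
        have : ∀ᵐ x : ℝ, x ≠ 0 := by simp [ae_iff]
        filter_upwards [this] with x hx
        by_cases hxS : x ∈ S1 ∪ S2
        · rw [Set.indicator_of_mem hxS]
        · rw [hsupp x hxS hx]; exact zero_le
    _ ≤ (∫⁻ x in S1, (gaussianPDF 0 1 * h) x) + ∫⁻ x in S2, (gaussianPDF 0 1 * h) x :=
        lintegral_union_le _ _ _
    _ ≤ (∫⁻ σ in setI ν s, ENNReal.ofReal (fE ν w σ)) + ∫⁻ σ in setI ν s, ENNReal.ofReal (fE ν w σ) :=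
        add_le_add (E1_half ν w s 1 (Or.inl rfl) h (hin 1 (Or.inl rfl)))
          (E1_half ν w s (-1) (Or.inr rfl) h (hin (-1) (Or.inr rfl)))
    _ = _ := by rw [two_mul]

end psi

theorem fE_int {m : ℕ} (ν : Fin m → ℝ) (s σ : ℝ) (h : σ ∈ setI ν s) :
    ∫⁻ w, ENNReal.ofReal (fE ν w σ) ∂(gv m) = ENNReal.ofReal (√(2 * π))⁻¹ := by
  have hd : ∀ j, 0 < ν j - σ ^ 2 := fun j => (sub_pos.2 (h.2.2 j))
  have hν : ∀ j, 0 < ν j := fun j => by nlinarith [h.2.2 j, sq_nonneg σ]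
  have hc : ∀ j, -1 < σ ^ 2 / (ν j - σ ^ 2) := fun j => by
    have : 0 ≤ σ ^ 2 / (ν j - σ ^ 2) := div_nonneg (sq_nonneg _) (hd j).le
    linarith
  have hI : Integrable (fun w : Fin m → ℝ => ∏ j, rexp (-(σ ^ 2 / (ν j - σ ^ 2)) * w j ^ 2 / 2)) (gv m) :=
    Integrable.fintype_prod (f := fun j x => rexp (-(σ ^ 2 / (ν j - σ ^ 2)) * x ^ 2 / 2))
      fun j => (gauss_exp_sq _ (hc j)).1
  rw [← ofReal_integral_eq_lintegral_ofReal (f := fun w => fE ν w σ) (hI.const_mul _)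
    (Filter.Eventually.of_forall fun w => by simp only [fE, fC, Pi.zero_apply]; positivity)]
  congr 1
  unfold fE
  rw [integral_const_mul, integral_fintype_prod_eq_prod (f := fun j x => rexp (-(σ ^ 2 / (ν j - σ ^ 2)) * x ^ 2 / 2))]
  simp only [(gauss_exp_sq _ (hc _)).2]
  unfold fC
  have : ∀ j, 1 + σ ^ 2 / (ν j - σ ^ 2) = ν j / (ν j - σ ^ 2) := fun j => by
    have := (hd j).ne'; field_simp; ring
  simp only [this]
  rw [mul_right_comm, ← Finset.prod_mul_distrib]
  rw [Finset.prod_eq_one, one_mul]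
  intro j _
  exact mul_inv_cancel₀ (Real.sqrt_pos.2 (div_pos (hν j) (hd j))).ne'

theorem E2 {m : ℕ} (ν : Fin m → ℝ) (s : ℝ) :
    ∫⁻ w, ∫⁻ σ in setI ν s, ENNReal.ofReal (fE ν w σ) ∂volume ∂(gv m) ≤ ENNReal.ofReal (√(2 * π))⁻¹ * ENNReal.ofReal s := by
  rw [lintegral_lintegral_swap]
  · rw [setLIntegral_congr_fun (setI_meas ν s) (fun σ hσ => fE_int ν s σ hσ), setLIntegral_const]
    gcongr
    calc volume (setI ν s) ≤ volume (Set.Ioc 0 s) := measure_mono fun σ hσ => ⟨hσ.1, hσ.2.1⟩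
      _ = _ := by simp
  · apply Measurable.aemeasurable
    apply ENNReal.measurable_ofReal.comp
    unfold fE fC
    fun_prop


open Classical in
noncomputable def GG {n : ℕ} (s : ℝ) (Z : Fin n → Fin n → ℝ) (r : Fin n → ℝ) : ENNReal :=
  if smallestSingularValue (Matrix.of Z) ≤ s then WW Z r else 0

theorem GG_meas {n : ℕ} (hn : 1 ≤ n) (s : ℝ) :
    Measurable fun p : (Fin n → Fin n → ℝ) × (Fin n → ℝ) => GG s p.1 p.2 := by
  unfold GG
  refine Measurable.ite ?_ (WW_meas hn) measurable_const
  exact measurableSet_le ((small_cont n).measurable.comp measurable_fst) measurable_const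

def cns {m : ℕ} (a : Fin (m + 1) → ℝ) (B : Fin m → Fin (m + 1) → ℝ) : Fin (m + 1) → Fin (m + 1) → ℝ :=
  Fin.cons a B

theorem cons_meas {m : ℕ} : Measurable fun p : (Fin (m + 1) → ℝ) × (Fin m → Fin (m + 1) → ℝ) =>
    cns p.1 p.2 := by
  refine measurable_pi_lambda _ fun i => ?_
  refine Fin.cases ?_ (fun j => ?_) i
  · exact measurable_fst
  · exact (measurable_pi_apply j).comp measurable_snd

theorem F1 {m : ℕ} (B : Fin m → Fin (m + 1) → ℝ) (s : ℝ) :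
    ∫⁻ a, GG s (cns a B) (Pi.single 0 1) ∂(gv (m + 1)) ≤
      2 * (ENNReal.ofReal (√(2 * π))⁻¹ * ENNReal.ofReal s) := by
  obtain ⟨U, μ, i0, hU, hS, hμ, h0⟩ := spectral (Matrix.of B)
  have hf : Measurable fun a : Fin (m + 1) → ℝ => GG s (cns a B) (Pi.single 0 1) := by
    have h1 : Measurable fun a : Fin (m + 1) → ℝ => cns a B :=
      cons_meas.comp (measurable_id.prodMk measurable_const)
    have h2 : Measurable fun a : Fin (m + 1) → ℝ =>
        (cns a B, (Pi.single 0 1 : Fin (m + 1) → ℝ)) :=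
      h1.prodMk measurable_const
    have h3 := GG_meas (n := m + 1) (Nat.succ_pos m) s
    have h4 := h3.comp h2
    exact h4
  rw [← (gv_rot U hU).lintegral_comp hf]
  have hf2 : Measurable fun a : Fin (m + 1) → ℝ => GG s (cns (U *ᵥ a) B) (Pi.single 0 1) :=
    hf.comp (gv_rot U hU).measurable
  have hmp := (measurePreserving_piFinSuccAbove (fun _ : Fin (m + 1) => gaussianReal 0 1) i0).symm
  have hf3 := hf2.comp hmp.measurable
  have hstep := hmp.lintegral_comp hf2
  have hstep2 := lintegral_prod_symm' (μ := gaussianReal 0 1) (ν := gv m) _ hf3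
  refine (hstep.symm.trans hstep2).le.trans ?_
  set ν : Fin m → ℝ := fun j => μ (i0.succAbove j) with hν
  have hae : ∀ᵐ w ∂(gv m), ∀ j, w j ≠ 0 := by
    rw [ae_all_iff]
    intro j
    have h1 : ∀ᵐ x ∂(gaussianReal 0 1), x ≠ 0 := by
      haveI := noAtoms_gaussianReal (μ := 0) (v := 1) one_ne_zero
      simp [ae_iff]
    exact (gv_coord j).quasiMeasurePreserving.ae h1
  refine le_trans (lintegral_mono_ae (g := fun w => 2 * ∫⁻ σ in setI ν s, ENNReal.ofReal (fE ν w σ)) ?_) ?_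
  · filter_upwards [hae] with w hw
    apply E1
    intro x hx hne
    obtain ⟨v, hv, hW⟩ := WW_attained (by omega) (cns (U *ᵥ (i0.insertNth x w)) B) (Pi.single 0 1)
    have hne' : GG s (cns (U *ᵥ (i0.insertNth x w)) B) (Pi.single 0 1) ≠ 0 := hne
    change ∃ σ ∈ setI ν s, |x| = fpsi ν w σ ∧ GG s (cns (U *ᵥ (i0.insertNth x w)) B) (Pi.single 0 1) ≤ _
    unfold GG at hne' ⊢
    split_ifs at hne' ⊢ with hs
    · rw [hW] at hne' ⊢
      rw [dotProduct_single_one] at hne' ⊢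
      have hv0 : v 0 ≠ 0 := by
        intro h; simp [h] at hne'
      obtain ⟨h1, h2, h3, h4⟩ := key_det' (Matrix.of B) U μ i0 hU hS h0 x w hx hw v _ rfl hv hv0
      exact ⟨_, ⟨h1, hs, h2⟩, h3, by rw [h4]; rfl⟩
    · exact absurd rfl hne'
  · rw [lintegral_const_mul']
    · gcongr
      exact E2 ν s
    · simp


theorem int_abs : ∫ x, |x| ∂(gaussianReal 0 1) = 2 * (√(2 * π))⁻¹ := by
  rw [integral_gaussianReal_eq_integral_smul one_ne_zero]
  have h1 := integral_comp_abs (f := fun x => gaussianPDFReal 0 1 x * x)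
  have h2 : ∀ x : ℝ, gaussianPDFReal 0 1 |x| = gaussianPDFReal 0 1 x := by
    intro x; simp [gaussianPDFReal]
  simp only [h2] at h1
  simp only [smul_eq_mul]
  rw [h1]
  congr 1
  have h3 := integral_rpow_mul_exp_neg_mul_rpow (p := 2) (q := 1) (b := 1/2) (by norm_num) (by norm_num) (by norm_num)
  have h4 : ∀ x : ℝ, gaussianPDFReal 0 1 x * x = (√(2 * π))⁻¹ * (x ^ (1:ℝ) * rexp (-(1/2) * x ^ (2:ℝ))) := by
    intro x
    simp [gaussianPDFReal]
    ring_nf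
  simp only [h4]
  rw [integral_const_mul, h3]
  norm_num [Real.rpow_neg_one]

theorem lint_abs : ∫⁻ x, ENNReal.ofReal |x| ∂(gaussianReal 0 1) = ENNReal.ofReal (2 * (√(2 * π))⁻¹) := by
  rw [← int_abs, ofReal_integral_eq_lintegral_ofReal]
  · have := (memLp_id_gaussianReal (μ := 0) (v := 1) 1).integrable (by norm_num)
    exact this.abs
  · exact Filter.Eventually.of_forall fun x => abs_nonneg x

theorem int_sq : Integrable (fun x => x ^ 2) (gaussianReal 0 1) ∧ ∫ x, x ^ 2 ∂(gaussianReal 0 1) = 1 := by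
  have hm := memLp_id_gaussianReal (μ := 0) (v := 1) 2
  refine ⟨hm.integrable_sq, ?_⟩
  have h := variance_id_gaussianReal (μ := 0) (v := 1)
  rw [variance_of_integral_eq_zero aemeasurable_id] at h
  · simpa using h
  · simp

theorem int_dot (n : ℕ) : Integrable (fun r : Fin n → ℝ => r ⬝ᵥ r) (gv n) ∧ ∫ r, r ⬝ᵥ r ∂(gv n) = n := by
  have h1 : ∀ i : Fin n, Integrable (fun r : Fin n → ℝ => r i ^ 2) (gv n) := fun i =>
    (gv_coord i).integrable_comp_of_integrable int_sq.1
  have h2 : ∀ i : Fin n, ∫ r : Fin n → ℝ, r i ^ 2 ∂(gv n) = 1 := fun i => by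
    rw [← int_sq.2, ← (gv_coord i).map_eq, integral_map (gv_coord i).measurable.aemeasurable (by fun_prop)]
  simp only [← dot_self_eq]
  refine ⟨integrable_finsetSum _ fun i _ => h1 i, ?_⟩
  rw [integral_finsetSum _ fun i _ => h1 i]
  simp [h2]

theorem lint_norm {n : ℕ} (hn : 1 ≤ n) :
    ∫⁻ r, ENNReal.ofReal √(r ⬝ᵥ r) ∂(gv n) ≤ ENNReal.ofReal √n := by
  have hn0 : (0:ℝ) < n := by exact_mod_cast hn
  have hs : 0 < √(n:ℝ) := Real.sqrt_pos.2 hn0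
  obtain ⟨hi, he⟩ := int_dot n
  have hi2 : Integrable (fun r : Fin n → ℝ => (r ⬝ᵥ r) * (2 * √(n:ℝ))⁻¹ + √(n:ℝ) / 2) (gv n) :=
    (hi.mul_const _).add (integrable_const _)
  calc ∫⁻ r, ENNReal.ofReal √(r ⬝ᵥ r) ∂(gv n)
      ≤ ∫⁻ r, ENNReal.ofReal ((r ⬝ᵥ r) * (2 * √(n:ℝ))⁻¹ + √(n:ℝ) / 2) ∂(gv n) := by
        refine lintegral_mono fun r => ENNReal.ofReal_le_ofReal ?_
        have h1 := Real.mul_self_sqrt (dot_self_nn r)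
        set t := √(r ⬝ᵥ r)
        rw [← h1, ← sub_nonneg]
        have : t * t * (2 * √(n:ℝ))⁻¹ + √(n:ℝ) / 2 - t = (t - √n) ^ 2 / (2 * √n) := by
          field_simp; ring
        rw [this]; positivity
    _ = ENNReal.ofReal (∫ r, ((r ⬝ᵥ r) * (2 * √(n:ℝ))⁻¹ + √(n:ℝ) / 2) ∂(gv n)) := by
        rw [ofReal_integral_eq_lintegral_ofReal hi2]
        exact Filter.Eventually.of_forall fun r => by
          have := dot_self_nn r
          simp only [Pi.zero_apply]; positivity
    _ ≤ _ := by
        apply ENNReal.ofReal_le_ofReal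
        rw [integral_add (hi.mul_const _) (integrable_const _), integral_mul_const, he]
        simp only [integral_const, probReal_univ, one_smul]
        apply le_of_eq
        have := Real.mul_self_sqrt hn0.le
        field_simp
        linarith

theorem Ga {m : ℕ} (s : ℝ) : ∫⁻ Z, GG s Z (Pi.single 0 1) ∂(gm (m + 1)) ≤
      2 * (ENNReal.ofReal (√(2 * π))⁻¹ * ENNReal.ofReal s) := by
  have hf : Measurable fun Z : Fin (m + 1) → Fin (m + 1) → ℝ => GG s Z (Pi.single 0 1) := by
    have h2 : Measurable fun Z : Fin (m + 1) → Fin (m + 1) → ℝ => (Z, (Pi.single 0 1 : Fin (m + 1) → ℝ)) :=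
      measurable_id.prodMk measurable_const
    have h3 := GG_meas (n := m + 1) (Nat.succ_pos m) s
    have h4 := h3.comp h2
    exact h4
  have hmp := (measurePreserving_piFinSuccAbove (fun _ : Fin (m + 1) => gv (m + 1)) 0).symm
  have hf3 := hf.comp hmp.measurable
  have hstep := hmp.lintegral_comp hf
  have hstep2 := lintegral_prod_symm' (μ := gv (m + 1)) (ν := Measure.pi fun _ : Fin m => gv (m + 1)) _ hf3
  refine (hstep.symm.trans hstep2).le.trans ?_
  calc _ ≤ ∫⁻ B : Fin m → Fin (m + 1) → ℝ, 2 * (ENNReal.ofReal (√(2 * π))⁻¹ * ENNReal.ofReal s) ∂(Measure.pi fun _ : Fin m => gv (m + 1)) := by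
        refine lintegral_mono fun B => ?_
        refine le_trans (le_of_eq ?_) (F1 B s)
        refine lintegral_congr fun a => ?_
        have : (MeasurableEquiv.piFinSuccAbove (fun _ : Fin (m + 1) => Fin (m + 1) → ℝ) 0).symm (a, B) = cns a B :=
          Fin.insertNth_zero' a B
        simp only [Function.comp_apply, this]
    _ = _ := by simp

theorem Gb {m : ℕ} (s : ℝ) (r : Fin (m + 1) → ℝ) : ∫⁻ Z, GG s Z r ∂(gm (m + 1)) ≤
      ENNReal.ofReal √(r ⬝ᵥ r) * (2 * (ENNReal.ofReal (√(2 * π))⁻¹ * ENNReal.ofReal s)) := by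
  have hmr : ∀ r : Fin (m + 1) → ℝ, Measurable fun Z : Fin (m + 1) → Fin (m + 1) → ℝ => GG s Z r := by
    intro r
    have h2 : Measurable fun Z : Fin (m + 1) → Fin (m + 1) → ℝ => (Z, r) :=
      measurable_id.prodMk measurable_const
    have h3 := GG_meas (n := m + 1) (Nat.succ_pos m) s
    have h4 := h3.comp h2
    exact h4
  have he : (Pi.single 0 1 : Fin (m + 1) → ℝ) ⬝ᵥ Pi.single 0 1 = 1 := sph_nonempty 0
  obtain ⟨v, hv, hr⟩ : ∃ v : Fin (m + 1) → ℝ, v ⬝ᵥ v = 1 ∧ r = √(r ⬝ᵥ r) • v := by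
    by_cases h : r = 0
    · exact ⟨_, he, by simp [h]⟩
    · have h1 := Real.sqrt_pos.2 (dot_self_pos h)
      have h2 := Real.mul_self_sqrt (dot_self_nn r)
      refine ⟨(√(r ⬝ᵥ r))⁻¹ • r, ?_, ?_⟩
      · rw [smul_dotProduct, dotProduct_smul, smul_eq_mul, smul_eq_mul]
        nth_rw 3 [← h2]
        field_simp
      · rw [smul_smul, mul_inv_cancel₀ h1.ne', one_smul]
  obtain ⟨U, hU, hUe⟩ := exists_rot v _ hv he
  have e1 : ∀ Z, GG s Z r = ENNReal.ofReal √(r ⬝ᵥ r) * GG s Z v := by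
    intro Z
    have : WW Z r = ENNReal.ofReal √(r ⬝ᵥ r) * WW Z v := by
      conv_lhs => rw [hr, WW_smul, abs_of_nonneg (Real.sqrt_nonneg _)]
    unfold GG
    rw [this]; split_ifs <;> simp
  simp only [e1]
  rw [lintegral_const_mul _ (hmr v)]
  gcongr
  refine le_trans (le_of_eq ?_) (Ga (m := m) s)
  rw [← (gm_rot U hU).lintegral_comp (hmr v)]
  refine lintegral_congr fun Z => ?_
  unfold GG
  rw [← WW_rot hU Z, hUe]
  have e : Matrix.of (fun i j => (U * Matrix.of Z) i j) = U * Matrix.of Z := rfl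
  rw [e, small_rot hU]

theorem Gd {n : ℕ} (hn : 1 ≤ n) (Z : Fin n → Fin n → ℝ) :
    ENNReal.ofReal (2 * (√(2 * π))⁻¹) ≤ ∫⁻ r, WW Z r ∂(gv n) := by
  obtain ⟨v, hv⟩ := exists_minVec hn (Matrix.of Z)
  have i : Fin n := ⟨0, hn⟩
  obtain ⟨U, hU, hUe⟩ := exists_rot v (Pi.single i 1) hv.1 (sph_nonempty i)
  calc ENNReal.ofReal (2 * (√(2 * π))⁻¹) = ∫⁻ r : Fin n → ℝ, ENNReal.ofReal |r i| ∂(gv n) := by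
        rw [← lint_abs, ← (gv_coord i).lintegral_comp (f := fun x => ENNReal.ofReal |x|) (by fun_prop)]
    _ = ∫⁻ r : Fin n → ℝ, ENNReal.ofReal |v ⬝ᵥ (U *ᵥ r)| ∂(gv n) := by
        refine lintegral_congr fun r => ?_
        rw [← hUe, rot_dot hU, single_one_dotProduct]
    _ = ∫⁻ r : Fin n → ℝ, ENNReal.ofReal |v ⬝ᵥ r| ∂(gv n) := by
        refine (gv_rot U hU).lintegral_comp (f := fun r => ENNReal.ofReal |v ⬝ᵥ r|) ?_
        have : Measurable fun r : Fin n → ℝ => v ⬝ᵥ r := (by fun_prop : Continuous fun r : Fin n → ℝ => v ⬝ᵥ r).measurable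
        exact ENNReal.measurable_ofReal.comp this.abs
    _ ≤ _ := lintegral_mono fun r => le_iSup₂_of_le v hv le_rfl

theorem part1 {d : ℕ} (hd : 1 ≤ d) (s : ℝ) (hs : 0 ≤ s) :
    (gm d) {Z | smallestSingularValue (Matrix.of Z) ≤ s} ≤ ENNReal.ofReal (√d * s) := by
  obtain ⟨m, rfl⟩ : ∃ m, d = m + 1 := ⟨d - 1, by omega⟩
  have hms : MeasurableSet {Z : Fin (m + 1) → Fin (m + 1) → ℝ | smallestSingularValue (Matrix.of Z) ≤ s} :=
    measurableSet_le (small_cont _).measurable measurable_const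
  set c := ENNReal.ofReal (2 * (√(2 * π))⁻¹) with hc
  have hpi : 0 < √(2 * π) := Real.sqrt_pos.2 (by positivity)
  have hc0 : c ≠ 0 := by
    rw [hc, ENNReal.ofReal_ne_zero_iff]; positivity
  have hct : c ≠ ⊤ := ENNReal.ofReal_ne_top
  have key : c * (gm (m + 1)) {Z | smallestSingularValue (Matrix.of Z) ≤ s} ≤ c * ENNReal.ofReal (√(m + 1 : ℕ) * s) := by
    calc c * (gm (m + 1)) {Z | smallestSingularValue (Matrix.of Z) ≤ s}
        = ∫⁻ Z in {Z | smallestSingularValue (Matrix.of Z) ≤ s}, c ∂(gm (m + 1)) := by rw [setLIntegral_const]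
      _ ≤ ∫⁻ Z in {Z | smallestSingularValue (Matrix.of Z) ≤ s}, (∫⁻ r, GG s Z r ∂(gv (m + 1))) ∂(gm (m + 1)) := by
          refine setLIntegral_mono' hms fun Z hZ => ?_
          refine (Gd hd Z).trans (lintegral_mono fun r => ?_)
          unfold GG
          rw [if_pos hZ.out]
      _ ≤ ∫⁻ Z, (∫⁻ r, GG s Z r ∂(gv (m + 1))) ∂(gm (m + 1)) := setLIntegral_le_lintegral _ _
      _ = ∫⁻ r, (∫⁻ Z, GG s Z r ∂(gm (m + 1))) ∂(gv (m + 1)) :=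
          lintegral_lintegral_swap (GG_meas hd s).aemeasurable
      _ ≤ ∫⁻ r, ENNReal.ofReal √(r ⬝ᵥ r) * (2 * (ENNReal.ofReal (√(2 * π))⁻¹ * ENNReal.ofReal s)) ∂(gv (m + 1)) :=
          lintegral_mono fun r => Gb s r
      _ = (∫⁻ r, ENNReal.ofReal √(r ⬝ᵥ r) ∂(gv (m + 1))) * (2 * (ENNReal.ofReal (√(2 * π))⁻¹ * ENNReal.ofReal s)) :=
          lintegral_mul_const' _ _ (by finiteness)
      _ ≤ ENNReal.ofReal √(m + 1 : ℕ) * (2 * (ENNReal.ofReal (√(2 * π))⁻¹ * ENNReal.ofReal s)) := by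
          gcongr; exact lint_norm hd
      _ = _ := by
          rw [hc, ENNReal.ofReal_mul (Real.sqrt_nonneg _), ENNReal.ofReal_mul (by norm_num), ENNReal.ofReal_ofNat]
          ring
  exact (ENNReal.mul_le_mul_iff_right hc0 hct).1 key


theorem pdf_eq (x : ℝ) : gaussianPDFReal 0 1 x = (√(2 * π))⁻¹ * rexp (-(1/2) * x ^ 2) := by
  rw [gaussianPDFReal]
  simp only [NNReal.coe_one, mul_one, sub_zero]
  congr 2
  ring

theorem ibp1 (g g' : ℝ → ℝ) (C : ℝ) (hg : ∀ t, HasDerivAt g (g' t) t) (hc : Continuous g')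
    (hb : ∀ t, |g t| ≤ C) (hb' : ∀ t, |g' t| ≤ C) :
    ∫ t, t * g t ∂(gaussianReal 0 1) = ∫ t, g' t ∂(gaussianReal 0 1) := by
  rw [integral_gaussianReal_eq_integral_smul one_ne_zero, integral_gaussianReal_eq_integral_smul one_ne_zero]
  simp only [smul_eq_mul]
  have hcg : Continuous g := continuous_iff_continuousAt.2 fun t => (hg t).continuousAt
  have i0 : Integrable (gaussianPDFReal 0 1) := integrable_gaussianPDFReal 0 1
  have i1 : Integrable (fun t => t * gaussianPDFReal 0 1 t) := by
    have := (integrable_mul_exp_neg_mul_sq (b := 1/2) (by norm_num)).const_mul (√(2 * π))⁻¹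
    refine this.congr (Filter.Eventually.of_forall fun t => ?_)
    simp only [pdf_eq]; ring
  have hv : ∀ t, HasDerivAt (fun t => - gaussianPDFReal 0 1 t) (t * gaussianPDFReal 0 1 t) t := by
    intro t
    simp only [pdf_eq]
    have h1 : HasDerivAt (fun t : ℝ => -(1/2) * t ^ 2) (-t) t := by
      have := (hasDerivAt_pow 2 t).const_mul (-(1/2) : ℝ)
      exact this.congr_deriv (by push_cast; ring)
    exact ((h1.exp.const_mul (√(2 * π))⁻¹).fun_neg).congr_deriv (by ring)
  have key := integral_mul_deriv_eq_deriv_mul_of_integrable (u := g) (u' := g')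
    (v := fun t => - gaussianPDFReal 0 1 t) (v' := fun t => t * gaussianPDFReal 0 1 t)
    (fun t _ => hg t) (fun t _ => hv t)
    (i1.bdd_mul hcg.aestronglyMeasurable (Filter.Eventually.of_forall hb))
    (i0.neg.bdd_mul hc.aestronglyMeasurable (Filter.Eventually.of_forall hb'))
    (i0.neg.bdd_mul hcg.aestronglyMeasurable (Filter.Eventually.of_forall hb))
  have e1 : ∀ t, gaussianPDFReal 0 1 t * (t * g t) = g t * (t * gaussianPDFReal 0 1 t) := fun t => by ring
  have e2 : ∀ t, g' t * -gaussianPDFReal 0 1 t = - (gaussianPDFReal 0 1 t * g' t) := fun t => by ring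
  simp only [e1]
  rw [key]
  simp only [e2]
  rw [integral_neg, neg_neg]

noncomputable abbrev gi (ι : Type) [Fintype ι] : Measure (ι → ℝ) := Measure.pi fun _ : ι => gaussianReal 0 1

theorem upd_mp {ι : Type} [Fintype ι] [DecidableEq ι] (i : ι) :
    MeasurePreserving (fun p : ℝ × (ι → ℝ) => Function.update p.2 i p.1) ((gaussianReal 0 1).prod (gi ι)) (gi ι) := by
  have hm : Measurable (fun p : ℝ × (ι → ℝ) => Function.update p.2 i p.1) := by
    refine measurable_pi_lambda _ fun j => ?_
    by_cases h : j = i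
    · subst h; simpa using measurable_fst
    · simp only [Function.update_of_ne h]
      exact (measurable_pi_apply j).comp measurable_snd
  refine ⟨hm, ?_⟩
  symm
  apply Measure.pi_eq
  intro s hs
  rw [Measure.map_apply hm (MeasurableSet.univ_pi hs)]
  have e : (fun p : ℝ × (ι → ℝ) => Function.update p.2 i p.1) ⁻¹' (Set.univ.pi s) =
      s i ×ˢ Set.univ.pi (Function.update s i Set.univ) := by
    ext ⟨t, z⟩
    simp only [Set.mem_preimage, Set.mem_univ_pi, Set.mem_prod]
    constructor
    · intro h
      refine ⟨by simpa using h i, fun j => ?_⟩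
      by_cases hj : j = i
      · subst hj; simp
      · simpa [hj] using h j
    · rintro ⟨h1, h2⟩ j
      by_cases hj : j = i
      · subst hj; simpa using h1
      · simpa [hj] using h2 j
  rw [e, Measure.prod_prod, Measure.pi_pi, ← Finset.mul_prod_erase _ _ (Finset.mem_univ i),
    ← Finset.mul_prod_erase _ (fun j => (gaussianReal 0 1) (s j)) (Finset.mem_univ i)]
  simp only [Function.update_self, measure_univ, one_mul]
  congr 1
  refine Finset.prod_congr rfl fun j hj => ?_
  rw [Function.update_of_ne (Finset.ne_of_mem_erase hj)]

theorem int_coord {ι : Type} [Fintype ι] (i : ι) : Integrable (fun z : ι → ℝ => z i) (gi ι) := by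
  have h := (memLp_id_gaussianReal (μ := 0) (v := 1) 1).integrable (by norm_num)
  exact (measurePreserving_eval (fun _ : ι => gaussianReal 0 1) i).integrable_comp_of_integrable h

theorem ibp {ι : Type} [Fintype ι] [DecidableEq ι] (i : ι) (G G' : (ι → ℝ) → ℝ) (C : ℝ)
    (hcG : Continuous G) (hcG' : Continuous G')
    (hG : ∀ z t, HasDerivAt (fun t => G (Function.update z i t)) (G' (Function.update z i t)) t)
    (hb : ∀ z, |G z| ≤ C) (hb' : ∀ z, |G' z| ≤ C) :
    ∫ z, z i * G z ∂(gi ι) = ∫ z, G' z ∂(gi ι) := by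
  have hi1 : Integrable (fun z : ι → ℝ => z i * G z) (gi ι) :=
    (int_coord i).mul_bdd hcG.aestronglyMeasurable (Filter.Eventually.of_forall hb)
  have hi2 : Integrable G' (gi ι) :=
    Integrable.of_bound hcG'.aestronglyMeasurable C (Filter.Eventually.of_forall hb')
  have hmp := upd_mp i
  have tr : ∀ F : (ι → ℝ) → ℝ, Continuous F → Integrable F (gi ι) →
      ∫ z, F z ∂(gi ι) = ∫ z, ∫ t, F (Function.update z i t) ∂(gaussianReal 0 1) ∂(gi ι) := by
    intro F hF hFi
    have h1 : Integrable (fun p : ℝ × (ι → ℝ) => F (Function.update p.2 i p.1)) ((gaussianReal 0 1).prod (gi ι)) :=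
      hmp.integrable_comp_of_integrable hFi
    have h2 : ∫ z, F z ∂(gi ι) = ∫ p : ℝ × (ι → ℝ), F (Function.update p.2 i p.1) ∂((gaussianReal 0 1).prod (gi ι)) := by
      conv_lhs => rw [← hmp.map_eq]
      rw [integral_map hmp.measurable.aemeasurable hF.aestronglyMeasurable]
    rw [h2, integral_prod_symm _ h1]
  rw [tr _ (by fun_prop) hi1, tr _ hcG' hi2]
  refine integral_congr_ae (Filter.Eventually.of_forall fun z => ?_)
  simp only [Function.update_self]
  refine ibp1 _ _ C (hG z) ?_ (fun t => hb _) (fun t => hb' _)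
  exact hcG'.comp (by fun_prop)


section slep
variable {N : ℕ} (p τ : ℝ)

noncomputable def se (w : Fin N → ℝ) (k : Fin N) : ℝ := rexp (p * (w k - τ))
noncomputable def sf (w : Fin N → ℝ) : ℝ := rexp (-∑ k, se p τ w k)
noncomputable def sf1 (k : Fin N) (w : Fin N → ℝ) : ℝ := -(p * se p τ w k * sf p τ w)
noncomputable def sf2 (k l : Fin N) (w : Fin N → ℝ) : ℝ :=
  p ^ 2 * se p τ w k * se p τ w l * sf p τ w - (if k = l then p ^ 2 * se p τ w k * sf p τ w else 0)

theorem se_deriv (w : ℝ → Fin N → ℝ) (w' : Fin N → ℝ) (t : ℝ) (hw : ∀ k, HasDerivAt (fun t => w t k) (w' k) t)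
    (k : Fin N) : HasDerivAt (fun t => se p τ (w t) k) (p * se p τ (w t) k * w' k) t := by
  unfold se
  exact ((((hw k).sub_const τ).const_mul p).exp).congr_deriv (by ring)

theorem sf_deriv (w : ℝ → Fin N → ℝ) (w' : Fin N → ℝ) (t : ℝ) (hw : ∀ k, HasDerivAt (fun t => w t k) (w' k) t) :
    HasDerivAt (fun t => sf p τ (w t)) (∑ k, sf1 p τ k (w t) * w' k) t := by
  have h := (HasDerivAt.fun_sum (u := Finset.univ) fun k _ => se_deriv p τ w w' t hw k).fun_neg.exp
  refine h.congr_deriv ?_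
  rw [mul_neg, Finset.mul_sum, ← Finset.sum_neg_distrib]
  refine Finset.sum_congr rfl fun k _ => ?_
  simp only [sf1, sf]; ring

theorem sf1_deriv (w : ℝ → Fin N → ℝ) (w' : Fin N → ℝ) (t : ℝ) (hw : ∀ k, HasDerivAt (fun t => w t k) (w' k) t)
    (k : Fin N) :
    HasDerivAt (fun t => sf1 p τ k (w t)) (∑ l, sf2 p τ k l (w t) * w' l) t := by
  have h := ((((se_deriv p τ w w' t hw k).const_mul p).mul (sf_deriv p τ w w' t hw))).fun_neg
  refine h.congr_deriv ?_
  simp only [sf2, sub_mul, Finset.sum_sub_distrib, ite_mul, zero_mul, Finset.sum_ite_eq, Finset.mem_univ, if_true]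
  rw [Finset.mul_sum, neg_add, ← Finset.sum_neg_distrib, add_comm, sub_eq_add_neg]
  congr 1
  · refine Finset.sum_congr rfl fun l _ => ?_
    simp only [sf1]; ring
  · ring

theorem se_pos (w : Fin N → ℝ) (k : Fin N) : 0 < se p τ w k := Real.exp_pos _
theorem sf_pos (w : Fin N → ℝ) : 0 < sf p τ w := Real.exp_pos _

theorem sf_le (w : Fin N → ℝ) : sf p τ w ≤ 1 := by
  unfold sf
  rw [Real.exp_le_one_iff, neg_nonpos]
  exact Finset.sum_nonneg fun k _ => (se_pos p τ w k).le

theorem se_le_sum (w : Fin N → ℝ) (k : Fin N) : se p τ w k ≤ ∑ k, se p τ w k :=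
  Finset.single_le_sum (f := se p τ w) (fun k _ => (se_pos p τ w k).le) (Finset.mem_univ k)

theorem se_sf_le (w : Fin N → ℝ) (k : Fin N) : se p τ w k * sf p τ w ≤ 1 := by
  have h1 := se_le_sum p τ w k
  unfold sf
  set S := ∑ k, se p τ w k
  rw [Real.exp_neg, mul_inv_le_iff₀ (Real.exp_pos _), one_mul]
  linarith [Real.add_one_le_exp S]

theorem se_se_sf_le (w : Fin N → ℝ) (k l : Fin N) : se p τ w k * se p τ w l * sf p τ w ≤ 2 := by
  have h1 := se_le_sum p τ w k
  have h2 := se_le_sum p τ w l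
  have hk := se_pos p τ w k
  have hl := se_pos p τ w l
  unfold sf
  set S := ∑ k, se p τ w k
  have hS : 0 ≤ S := hk.le.trans h1
  rw [Real.exp_neg, mul_inv_le_iff₀ (Real.exp_pos _)]
  have := Real.quadratic_le_exp_of_nonneg hS
  nlinarith [mul_le_mul h1 h2 hl.le hS]

theorem sf1_bd (hp : 0 ≤ p) (k : Fin N) (w : Fin N → ℝ) : |sf1 p τ k w| ≤ p := by
  have h0 := (se_pos p τ w k)
  have h1 := sf_pos p τ w
  unfold sf1
  rw [abs_neg, abs_of_nonneg (by positivity), mul_assoc]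
  exact mul_le_of_le_one_right hp (se_sf_le p τ w k)

theorem sf2_bd (k l : Fin N) (w : Fin N → ℝ) : |sf2 p τ k l w| ≤ 3 * p ^ 2 := by
  have h0 := (se_pos p τ w k)
  have hl := (se_pos p τ w l)
  have h1 := sf_pos p τ w
  have h2 := se_se_sf_le p τ w k l
  have h3 := se_sf_le p τ w k
  have h4 : 0 ≤ se p τ w k * se p τ w l * sf p τ w := by positivity
  have h5 : 0 ≤ se p τ w k * sf p τ w := by positivity
  have hp := sq_nonneg p
  unfold sf2
  rw [abs_le]
  split_ifs <;> constructor <;> nlinarith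

theorem sf2_nonneg (k l : Fin N) (h : k ≠ l) (w : Fin N → ℝ) : 0 ≤ sf2 p τ k l w := by
  have h0 := (se_pos p τ w k)
  have hl := (se_pos p τ w l)
  have h1 := sf_pos p τ w
  unfold sf2
  rw [if_neg h, sub_zero]
  positivity

theorem se_cont (k : Fin N) : Continuous fun w => se p τ w k := by unfold se; fun_prop
theorem sf_cont : Continuous (sf (N := N) p τ) := by unfold sf se; fun_prop
theorem sf1_cont (k : Fin N) : Continuous (sf1 p τ k) := by unfold sf1 sf se; fun_prop
theorem sf2_cont (k l : Fin N) : Continuous (sf2 p τ k l) := by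
  unfold sf2
  have h1 := se_cont p τ k
  have h2 := se_cont p τ l
  have h3 := sf_cont (N := N) p τ
  by_cases h : k = l
  · simp only [h, if_true]; fun_prop
  · simp only [h, if_false]; fun_prop

end slep

section slep2
variable {N : ℕ} {ι : Type} [Fintype ι] [DecidableEq ι]

/-- IBP for `sf1` of linear forms -/
theorem ibp_lin (p τ : ℝ) (hp : 0 ≤ p) (a : Fin N → ι → ℝ) (k : Fin N) (i : ι) :
    ∫ z, z i * sf1 p τ k (fun l => a l ⬝ᵥ z) ∂(gi ι) =
      ∑ l, a l i * ∫ z, sf2 p τ k l (fun l => a l ⬝ᵥ z) ∂(gi ι) := by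
  have hW : Continuous fun z : ι → ℝ => (fun l => a l ⬝ᵥ z) := by fun_prop
  have hc2 : ∀ l, Continuous fun z : ι → ℝ => sf2 p τ k l (fun l => a l ⬝ᵥ z) := fun l => (sf2_cont p τ k l).comp hW
  have hi : ∀ l, Integrable (fun z : ι → ℝ => sf2 p τ k l (fun l => a l ⬝ᵥ z)) (gi ι) := fun l =>
    Integrable.of_bound (hc2 l).aestronglyMeasurable (3 * p ^ 2) (Filter.Eventually.of_forall fun z => sf2_bd p τ k l _)
  have key := ibp i (fun z => sf1 p τ k (fun l => a l ⬝ᵥ z)) (fun z => ∑ l, sf2 p τ k l (fun l => a l ⬝ᵥ z) * a l i)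
    (p + ∑ l, 3 * p ^ 2 * |a l i|) ((sf1_cont p τ k).comp hW)
    (continuous_finsetSum _ fun l _ => (hc2 l).mul continuous_const) ?_ ?_ ?_
  · rw [key, integral_finsetSum _ fun l _ => (hi l).mul_const _]
    refine Finset.sum_congr rfl fun l _ => ?_
    rw [integral_mul_const, mul_comm]
  · intro z t
    refine sf1_deriv p τ (fun t l => a l ⬝ᵥ Function.update z i t) (fun l => a l i) t ?_ k
    intro l
    have : ∀ t, a l ⬝ᵥ Function.update z i t = a l i * t + ∑ j ∈ Finset.univ.erase i, a l j * z j := by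
      intro t
      rw [dotProduct, ← Finset.add_sum_erase _ _ (Finset.mem_univ i), Function.update_self]
      congr 1
      refine Finset.sum_congr rfl fun j hj => ?_
      rw [Function.update_of_ne (Finset.ne_of_mem_erase hj)]
    simp only [this]
    simpa using ((hasDerivAt_id t).const_mul (a l i)).add_const (∑ j ∈ Finset.univ.erase i, a l j * z j)
  · intro z
    refine (sf1_bd p τ hp k _).trans ?_
    have : 0 ≤ ∑ l, 3 * p ^ 2 * |a l i| := Finset.sum_nonneg fun l _ => by positivity
    linarith
  · intro z
    refine (Finset.abs_sum_le_sum_abs _ _).trans ?_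
    have : ∑ l, |sf2 p τ k l (fun l => a l ⬝ᵥ z) * a l i| ≤ ∑ l, 3 * p ^ 2 * |a l i| := by
      refine Finset.sum_le_sum fun l _ => ?_
      rw [abs_mul]
      exact mul_le_mul_of_nonneg_right (sf2_bd p τ k l _) (abs_nonneg _)
    linarith

variable (p τ : ℝ) (x y : Fin N → ι → ℝ)

noncomputable def sa (θ : ℝ) (k : Fin N) : ι → ℝ := Real.cos θ • x k + Real.sin θ • y k
noncomputable def sb (θ : ℝ) (k : Fin N) : ι → ℝ := (-Real.sin θ) • x k + Real.cos θ • y k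

theorem sa_deriv (z : ι → ℝ) (θ : ℝ) (k : Fin N) :
    HasDerivAt (fun θ => sa x y θ k ⬝ᵥ z) (sb x y θ k ⬝ᵥ z) θ := by
  unfold sa sb
  simp only [add_dotProduct, smul_dotProduct, smul_eq_mul]
  exact ((hasDerivAt_cos θ).mul_const _).add ((hasDerivAt_sin θ).mul_const _)

theorem slep_deriv (hp : 0 ≤ p) (θ : ℝ) :
    HasDerivAt (fun θ => ∫ z, sf p τ (fun l => sa x y θ l ⬝ᵥ z) ∂(gi ι))
      (∑ k, ∑ l, (sb x y θ k ⬝ᵥ sa x y θ l) * ∫ z, sf2 p τ k l (fun l => sa x y θ l ⬝ᵥ z) ∂(gi ι)) θ := by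
  have hW : ∀ θ, Continuous fun z : ι → ℝ => (fun l => sa x y θ l ⬝ᵥ z) := fun θ => by fun_prop
  have key := hasDerivAt_integral_of_dominated_loc_of_deriv_le (μ := gi ι) (s := Set.univ) (x₀ := θ)
    (F := fun θ z => sf p τ (fun l => sa x y θ l ⬝ᵥ z))
    (F' := fun θ z => ∑ k, sf1 p τ k (fun l => sa x y θ l ⬝ᵥ z) * (sb x y θ k ⬝ᵥ z))
    (bound := fun z => ∑ k, p * ∑ i, (|x k i| + |y k i|) * |z i|) Filter.univ_mem
    (Filter.Eventually.of_forall fun θ => ((sf_cont p τ).comp (hW θ)).aestronglyMeasurable)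
    (Integrable.of_bound ((sf_cont p τ).comp (hW θ)).aestronglyMeasurable 1
      (Filter.Eventually.of_forall fun z => by
        rw [Real.norm_of_nonneg (sf_pos _ _ _).le]; exact sf_le _ _ _))
    ?_ ?_ ?_ ?_
  · refine key.2.congr_deriv ?_
    have hi : ∀ k i, Integrable (fun z : ι → ℝ => z i * sf1 p τ k (fun l => sa x y θ l ⬝ᵥ z)) (gi ι) := fun k i =>
      (int_coord i).mul_bdd ((sf1_cont p τ k).comp (hW θ)).aestronglyMeasurable
        (Filter.Eventually.of_forall fun z => sf1_bd p τ hp k _)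
    have e1 : ∀ z : ι → ℝ, ∑ k, sf1 p τ k (fun l => sa x y θ l ⬝ᵥ z) * (sb x y θ k ⬝ᵥ z) =
        ∑ k, ∑ i, sb x y θ k i * (z i * sf1 p τ k (fun l => sa x y θ l ⬝ᵥ z)) := by
      intro z
      refine Finset.sum_congr rfl fun k _ => ?_
      rw [dotProduct, Finset.mul_sum]
      exact Finset.sum_congr rfl fun i _ => by ring
    simp only [e1]
    rw [integral_finsetSum _ fun k _ => integrable_finsetSum _ fun i _ => (hi k i).const_mul _]
    refine Finset.sum_congr rfl fun k _ => ?_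
    rw [integral_finsetSum _ fun i _ => (hi k i).const_mul _]
    simp only [integral_const_mul, ibp_lin p τ hp (sa x y θ) k, Finset.mul_sum]
    rw [Finset.sum_comm]
    refine Finset.sum_congr rfl fun l _ => ?_
    rw [dotProduct, Finset.sum_mul]
    exact Finset.sum_congr rfl fun i _ => by ring
  · refine Continuous.aestronglyMeasurable ?_
    refine continuous_finsetSum _ fun k _ => ((sf1_cont p τ k).comp (hW θ)).mul (by fun_prop)
  · refine Filter.Eventually.of_forall fun z θ _ => ?_
    refine (norm_sum_le _ _).trans (Finset.sum_le_sum fun k _ => ?_)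
    rw [norm_mul]
    refine mul_le_mul (sf1_bd p τ hp k _) ?_ (norm_nonneg _) hp
    rw [dotProduct]
    refine (norm_sum_le _ _).trans (Finset.sum_le_sum fun i _ => ?_)
    rw [norm_mul]
    refine mul_le_mul_of_nonneg_right ?_ (abs_nonneg _)
    simp only [sb, Pi.add_apply, Pi.smul_apply, smul_eq_mul]
    refine (norm_add_le _ _).trans ?_
    rw [norm_mul, norm_mul, norm_neg]
    exact add_le_add (mul_le_of_le_one_left (abs_nonneg _) (Real.abs_sin_le_one θ))
      (mul_le_of_le_one_left (abs_nonneg _) (Real.abs_cos_le_one θ))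
  · exact integrable_finsetSum _ fun k _ => (integrable_finsetSum _ fun i _ => (int_coord i).abs.const_mul _).const_mul _
  · exact Filter.Eventually.of_forall fun z θ _ =>
      sf_deriv p τ (fun θ l => sa x y θ l ⬝ᵥ z) (fun k => sb x y θ k ⬝ᵥ z) θ (sa_deriv x y z θ)

theorem slepian_smooth (hp : 0 ≤ p) (hxy : ∀ k l, x k ⬝ᵥ y l = 0)
    (hd : ∀ k, x k ⬝ᵥ x k = y k ⬝ᵥ y k) (ho : ∀ k l, y k ⬝ᵥ y l ≤ x k ⬝ᵥ x l) :
    ∫ z, sf p τ (fun l => y l ⬝ᵥ z) ∂(gi ι) ≤ ∫ z, sf p τ (fun l => x l ⬝ᵥ z) ∂(gi ι) := by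
  have hD := slep_deriv p τ x y hp
  have hanti : AntitoneOn (fun θ => ∫ z, sf p τ (fun l => sa x y θ l ⬝ᵥ z) ∂(gi ι)) (Set.Icc 0 (π / 2)) := by
    refine antitoneOn_of_deriv_nonpos (convex_Icc _ _) (fun θ _ => (hD θ).continuousAt.continuousWithinAt)
      (fun θ _ => (hD θ).differentiableAt.differentiableWithinAt) ?_
    intro θ hθ
    rw [interior_Icc] at hθ
    rw [(hD θ).deriv]
    refine Finset.sum_nonpos fun k _ => Finset.sum_nonpos fun l _ => ?_
    have e : sb x y θ k ⬝ᵥ sa x y θ l = Real.sin θ * Real.cos θ * (y k ⬝ᵥ y l - x k ⬝ᵥ x l) := by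
      simp only [sa, sb, add_dotProduct, dotProduct_add, smul_dotProduct, dotProduct_smul, smul_eq_mul, hxy,
        dotProduct_comm (y k) (x l)]
      ring
    rw [e]
    have hs : 0 ≤ Real.sin θ := Real.sin_nonneg_of_nonneg_of_le_pi hθ.1.le (by linarith [hθ.2, Real.pi_pos])
    have hc : 0 ≤ Real.cos θ := Real.cos_nonneg_of_mem_Icc ⟨by linarith [hθ.1, Real.pi_pos], hθ.2.le⟩
    by_cases hkl : k = l
    · subst hkl
      rw [hd k]; simp
    · refine mul_nonpos_of_nonpos_of_nonneg (mul_nonpos_of_nonneg_of_nonpos (mul_nonneg hs hc) (by linarith [ho k l])) ?_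
      exact integral_nonneg fun z => sf2_nonneg p τ k l hkl _
  have h := hanti (Set.left_mem_Icc.2 (by positivity)) (Set.right_mem_Icc.2 (by positivity)) (by positivity)
  simpa [sa] using h

end slep2


theorem slep_lim {N : ℕ} {ι : Type} [Fintype ι] [DecidableEq ι] (x y : Fin N → ι → ℝ) (τ ε : ℝ) (hε : 0 < ε)
    (hxy : ∀ k l, x k ⬝ᵥ y l = 0)
    (hd : ∀ k, x k ⬝ᵥ x k = y k ⬝ᵥ y k) (ho : ∀ k l, y k ⬝ᵥ y l ≤ x k ⬝ᵥ x l) :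
    (gi ι).real {z | ∃ k, τ + ε ≤ x k ⬝ᵥ z} ≤ (gi ι).real {z | ∃ k, τ - ε ≤ y k ⬝ᵥ z} := by
  have hms : ∀ (a : Fin N → ι → ℝ) (c : ℝ), MeasurableSet {z : ι → ℝ | ∃ k, c ≤ a k ⬝ᵥ z} := by
    intro a c
    rw [Set.ofPred_exists]
    exact MeasurableSet.iUnion fun k => (isClosed_le continuous_const (by fun_prop)).measurableSet
  set A := {z : ι → ℝ | ∃ k, τ + ε ≤ x k ⬝ᵥ z} with hA
  set B := {z : ι → ℝ | ∃ k, τ - ε ≤ y k ⬝ᵥ z} with hB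
  have hi : ∀ (p : ℝ) (a : Fin N → ι → ℝ), Integrable (fun z : ι → ℝ => sf p τ (fun l => a l ⬝ᵥ z)) (gi ι) := by
    intro p a
    refine Integrable.of_bound ((sf_cont p τ).comp (by fun_prop)).aestronglyMeasurable 1 ?_
    exact (Filter.Eventually.of_forall fun z => by
        rw [Real.norm_of_nonneg (sf_pos _ _ _).le]; exact sf_le _ _ _)
  have hn : ∀ n : ℕ, (gi ι).real A * (1 - rexp (-rexp (n * ε))) ≤
      (gi ι).real B + (1 - rexp (-(N * rexp (-(n * ε))))) := by
    intro n
    have h0 := slepian_smooth (n : ℝ) τ x y (Nat.cast_nonneg n) hxy hd ho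
    have h1 : (gi ι).real A * (1 - rexp (-rexp (n * ε))) ≤ ∫ z, (1 - sf n τ (fun l => x l ⬝ᵥ z)) ∂(gi ι) := by
      rw [← smul_eq_mul, ← integral_indicator_const _ (hms x _)]
      refine integral_mono ((integrable_const _).indicator (hms x _)) ((integrable_const _).sub (hi _ _)) ?_
      intro z
      by_cases hz : z ∈ A
      · rw [Set.indicator_of_mem hz]
        obtain ⟨k, hk⟩ := hz
        have := se_le_sum (n : ℝ) τ (fun l => x l ⬝ᵥ z) k
        have h2 : rexp (n * ε) ≤ se (n : ℝ) τ (fun l => x l ⬝ᵥ z) k := by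
          unfold se
          apply Real.exp_le_exp.2
          exact mul_le_mul_of_nonneg_left (by linarith) (Nat.cast_nonneg n)
        have : sf (n : ℝ) τ (fun l => x l ⬝ᵥ z) ≤ rexp (-rexp (n * ε)) := by
          unfold sf
          apply Real.exp_le_exp.2
          linarith
        simp only; linarith
      · rw [Set.indicator_of_notMem hz]
        have := sf_le (n : ℝ) τ (fun l => x l ⬝ᵥ z)
        simp only; linarith
    have h2 : ∫ z, (1 - sf n τ (fun l => y l ⬝ᵥ z)) ∂(gi ι) ≤ (gi ι).real B + (1 - rexp (-(N * rexp (-(n * ε))))) := by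
      have e : (gi ι).real B + (1 - rexp (-(N * rexp (-(n * ε))))) =
          ∫ z, (B.indicator (fun _ => (1 : ℝ)) z + (1 - rexp (-(N * rexp (-(n * ε)))))) ∂(gi ι) := by
        rw [integral_add ((integrable_const _).indicator (hms y _)) (integrable_const _),
          integral_indicator_const _ (hms y _)]
        simp only [integral_const, probReal_univ, smul_eq_mul, mul_one, one_mul, ← hB]
      rw [e]
      refine integral_mono ((integrable_const _).sub (hi _ _))
        (((integrable_const _).indicator (hms y _)).add (integrable_const _)) ?_
      intro z
      have hl : rexp (-(N * rexp (-(n * ε)))) ≤ 1 := by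
        rw [Real.exp_le_one_iff, neg_nonpos]; positivity
      have hs := sf_pos (n : ℝ) τ (fun l => y l ⬝ᵥ z)
      by_cases hz : z ∈ B
      · simp only [Set.indicator_of_mem hz]; linarith
      · simp only [Set.indicator_of_notMem hz]
        have : rexp (-(N * rexp (-(n * ε)))) ≤ sf (n : ℝ) τ (fun l => y l ⬝ᵥ z) := by
          unfold sf
          apply Real.exp_le_exp.2
          rw [neg_le_neg_iff]
          have : ∑ k, se (n : ℝ) τ (fun l => y l ⬝ᵥ z) k ≤ ∑ k : Fin N, rexp (-(n * ε)) := by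
            refine Finset.sum_le_sum fun k _ => ?_
            unfold se
            apply Real.exp_le_exp.2
            have hk : y k ⬝ᵥ z < τ - ε := by
              by_contra hk
              exact hz ⟨k, not_lt.1 hk⟩
            have := mul_le_mul_of_nonneg_left (show y k ⬝ᵥ z - τ ≤ -ε by linarith) (Nat.cast_nonneg (α := ℝ) n)
            linarith
          simpa using this
        linarith
    rw [integral_sub (integrable_const _) (hi _ _)] at h1 h2
    linarith
  have t0 : Filter.Tendsto (fun n : ℕ => (n : ℝ) * ε) Filter.atTop Filter.atTop :=
    tendsto_natCast_atTop_atTop.atTop_mul_const hε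
  have t1 : Filter.Tendsto (fun n : ℕ => (gi ι).real A * (1 - rexp (-rexp (n * ε)))) Filter.atTop
      (nhds ((gi ι).real A * (1 - 0))) := by
    refine Filter.Tendsto.const_mul _ (Filter.Tendsto.const_sub _ ?_)
    exact Real.tendsto_exp_neg_atTop_nhds_zero.comp (Real.tendsto_exp_atTop.comp t0)
  have t2 : Filter.Tendsto (fun n : ℕ => (gi ι).real B + (1 - rexp (-(N * rexp (-(n * ε)))))) Filter.atTop
      (nhds ((gi ι).real B + (1 - rexp (-(N * 0))))) := by
    refine Filter.Tendsto.const_add _ (Filter.Tendsto.const_sub _ ?_)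
    refine (Real.continuous_exp.tendsto _).comp (Filter.Tendsto.neg (Filter.Tendsto.const_mul _ ?_))
    exact Real.tendsto_exp_neg_atTop_nhds_zero.comp t0
  have := le_of_tendsto_of_tendsto' t1 t2 hn
  simpa using this


abbrev GI (d : ℕ) : Type := (Fin d × Fin d) ⊕ (Unit ⊕ (Fin d ⊕ Fin d))

def xv {d : ℕ} (u v : Fin d → ℝ) : GI d → ℝ :=
  Sum.elim (fun p => u p.1 * v p.2) (Sum.elim (fun _ => 1) (Sum.elim (fun _ => 0) (fun _ => 0)))
def yv {d : ℕ} (u v : Fin d → ℝ) : GI d → ℝ :=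
  Sum.elim (fun _ => 0) (Sum.elim (fun _ => 0) (Sum.elim u v))

def zM {d : ℕ} (z : GI d → ℝ) : Fin d → Fin d → ℝ := fun i j => z (Sum.inl (i, j))
def zx {d : ℕ} (z : GI d → ℝ) : ℝ := z (Sum.inr (Sum.inl ()))
def zg {d : ℕ} (z : GI d → ℝ) : Fin d → ℝ := fun i => z (Sum.inr (Sum.inr (Sum.inl i)))
def zh {d : ℕ} (z : GI d → ℝ) : Fin d → ℝ := fun i => z (Sum.inr (Sum.inr (Sum.inr i)))

theorem xv_dot {d : ℕ} (u v : Fin d → ℝ) (z : GI d → ℝ) :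
    xv u v ⬝ᵥ z = u ⬝ᵥ (Matrix.of (zM z) *ᵥ v) + zx z := by
  simp only [dotProduct, Fintype.sum_sum_type, Fintype.sum_prod_type, xv, Sum.elim_inl, Sum.elim_inr, zero_mul,
    Finset.sum_const_zero, add_zero, one_mul, mulVec, of_apply, zM, zx, Finset.mul_sum]
  congr 1
  · refine Finset.sum_congr rfl fun i _ => Finset.sum_congr rfl fun j _ => by ring
  · simp

theorem yv_dot {d : ℕ} (u v : Fin d → ℝ) (z : GI d → ℝ) :
    yv u v ⬝ᵥ z = u ⬝ᵥ zg z + v ⬝ᵥ zh z := by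
  simp [dotProduct, Fintype.sum_sum_type, yv, zg, zh]

theorem xv_xv {d : ℕ} (u v u' v' : Fin d → ℝ) : xv u v ⬝ᵥ xv u' v' = (u ⬝ᵥ u') * (v ⬝ᵥ v') + 1 := by
  simp only [dotProduct, Fintype.sum_sum_type, Fintype.sum_prod_type, xv, Sum.elim_inl, Sum.elim_inr, zero_mul,
    Finset.sum_const_zero, add_zero, one_mul, Finset.sum_mul_sum]
  congr 1
  · refine Finset.sum_congr rfl fun i _ => Finset.sum_congr rfl fun j _ => by ring
  · simp

theorem dot_le_one {d : ℕ} {u v : Fin d → ℝ} (hu : u ⬝ᵥ u = 1) (hv : v ⬝ᵥ v = 1) : u ⬝ᵥ v ≤ 1 := by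
  have := dot_cs u v
  rw [hu, hv] at this
  nlinarith

theorem dot_le_sqrt {d : ℕ} {u : Fin d → ℝ} (v : Fin d → ℝ) (hu : u ⬝ᵥ u = 1) : u ⬝ᵥ v ≤ √(v ⬝ᵥ v) := by
  have := dot_cs u v
  rw [hu, one_mul] at this
  exact Real.le_sqrt_of_sq_le this

theorem large_lt {d : ℕ} (hd : 1 ≤ d) (Z : Matrix (Fin d) (Fin d) ℝ) (a : ℝ) (h : a < largestSingularValue Z) :
    ∃ u v : Fin d → ℝ, u ⬝ᵥ u = 1 ∧ v ⬝ᵥ v = 1 ∧ a < u ⬝ᵥ (Z *ᵥ v) := by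
  have e := sph_nonempty (⟨0, hd⟩ : Fin d)
  rw [large_eq] at h
  have hne : {v : Fin d → ℝ | v ⬝ᵥ v = 1}.Nonempty := ⟨_, e⟩
  obtain ⟨_, ⟨v, hv, rfl⟩, h2⟩ := exists_lt_of_lt_csSup (hne.image _) h
  by_cases h0 : Z *ᵥ v = 0
  · refine ⟨_, v, e, hv, ?_⟩
    simp only [h0] at h2 ⊢
    simpa using h2
  · have hp := dot_self_pos h0
    have hs := Real.sqrt_pos.2 hp
    have hq := Real.mul_self_sqrt hp.le
    refine ⟨(√((Z *ᵥ v) ⬝ᵥ (Z *ᵥ v)))⁻¹ • (Z *ᵥ v), v, ?_, hv, ?_⟩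
    · rw [smul_dotProduct, dotProduct_smul, smul_eq_mul, smul_eq_mul]
      nth_rw 3 [← hq]
      field_simp
    · rw [smul_dotProduct, smul_eq_mul]
      nth_rw 2 [← hq]
      rw [inv_mul_cancel_left₀ hs.ne']
      exact h2

theorem chev {d : ℕ} (hd : 1 ≤ d) (τ ε : ℝ) (hε : 0 < ε) :
    (gi (GI d)) {z | τ < largestSingularValue (Matrix.of (zM z)) + zx z} ≤
      (gi (GI d)) {z | τ - ε ≤ √(zg z ⬝ᵥ zg z) + √(zh z ⬝ᵥ zh z)} := by
  let S := {q : (Fin d → ℝ) × (Fin d → ℝ) // q.1 ⬝ᵥ q.1 = 1 ∧ q.2 ⬝ᵥ q.2 = 1}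
  have e := sph_nonempty (⟨0, hd⟩ : Fin d)
  have : Nonempty S := ⟨⟨(_, _), e, e⟩⟩
  let q : ℕ → S := TopologicalSpace.denseSeq S
  have hsub : {z | τ < largestSingularValue (Matrix.of (zM z)) + zx z} ⊆
      ⋃ N : ℕ, {z : GI d → ℝ | ∃ k : Fin N, τ ≤ xv (q k).1.1 (q k).1.2 ⬝ᵥ z} := by
    intro z hz
    obtain ⟨u, v, hu, hv, huv⟩ := large_lt hd (Matrix.of (zM z)) (τ - zx z) (by
      have : τ < _ := hz
      linarith)
    have ho : IsOpen {s : S | τ - zx z < s.1.1 ⬝ᵥ (Matrix.of (zM z) *ᵥ s.1.2)} := by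
      refine isOpen_lt continuous_const ?_
      fun_prop
    obtain ⟨k, hs⟩ := (TopologicalSpace.denseRange_denseSeq S).exists_mem_open ho ⟨⟨(u, v), hu, hv⟩, huv⟩
    refine Set.mem_iUnion.2 ⟨k + 1, ⟨k, Nat.lt_succ_self k⟩, ?_⟩
    rw [xv_dot]
    have : τ - zx z < _ := hs
    exact (by linarith)
  refine (measure_mono hsub).trans ?_
  have hmono : Monotone fun N : ℕ => {z : GI d → ℝ | ∃ k : Fin N, τ ≤ xv (q k).1.1 (q k).1.2 ⬝ᵥ z} := by
    rintro N M hNM z ⟨k, hk⟩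
    exact ⟨⟨k, k.2.trans_le hNM⟩, hk⟩
  rw [hmono.measure_iUnion]
  refine iSup_le fun N => ?_
  have h := slep_lim (N := N) (ι := GI d) (fun k => xv (q k).1.1 (q k).1.2) (fun k => yv (q k).1.1 (q k).1.2)
    (τ - ε / 2) (ε / 2) (by positivity) ?_ ?_ ?_
  · rw [Measure.real, Measure.real, ENNReal.toReal_le_toReal (measure_ne_top _ _) (measure_ne_top _ _)] at h
    have e1 : τ - ε / 2 + ε / 2 = τ := by ring
    have e2 : τ - ε / 2 - ε / 2 = τ - ε := by ring
    rw [e1, e2] at h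
    refine h.trans (measure_mono ?_)
    rintro z ⟨k, hk⟩
    rw [yv_dot] at hk
    exact hk.trans (add_le_add (dot_le_sqrt _ (q k).2.1) (dot_le_sqrt _ (q k).2.2))
  · intro k l
    rw [xv_dot]
    have : zM (yv (q l).1.1 (q l).1.2) = 0 := by ext i j; simp [zM, yv]
    rw [this]
    simp [zx, yv]
  · intro k
    rw [xv_xv, yv_dot]
    have h1 := (q k).2.1
    have h2 := (q k).2.2
    change _ = (q k).1.1 ⬝ᵥ (q k).1.1 + (q k).1.2 ⬝ᵥ (q k).1.2
    rw [h1, h2]; norm_num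
  · intro k l
    rw [xv_xv, yv_dot]
    change (q k).1.1 ⬝ᵥ (q l).1.1 + (q k).1.2 ⬝ᵥ (q l).1.2 ≤ _
    have h1 := dot_le_one (q k).2.1 (q l).2.1
    have h2 := dot_le_one (q k).2.2 (q l).2.2
    nlinarith


theorem zM_cont {d : ℕ} : Continuous (zM (d := d)) := by unfold zM; fun_prop
theorem zx_cont {d : ℕ} : Continuous (zx (d := d)) := by unfold zx; fun_prop
theorem zg_cont {d : ℕ} : Continuous (zg (d := d)) := by unfold zg; fun_prop
theorem zh_cont {d : ℕ} : Continuous (zh (d := d)) := by unfold zh; fun_prop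

theorem chev_mgf {d : ℕ} (hd : 1 ≤ d) (l ε : ℝ) (hl : 0 < l) (hε : 0 < ε) :
    ∫⁻ z, ENNReal.ofReal (rexp (l * (largestSingularValue (Matrix.of (zM z)) + zx z))) ∂(gi (GI d)) ≤
      ∫⁻ z, ENNReal.ofReal (rexp (l * (√(zg z ⬝ᵥ zg z) + √(zh z ⬝ᵥ zh z) + ε))) ∂(gi (GI d)) := by
  have c1 : Continuous fun z : GI d → ℝ => largestSingularValue (Matrix.of (zM z)) := (large_cont d).comp zM_cont
  have c2 := zx_cont (d := d)
  have c3 := zg_cont (d := d)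
  have c4 := zh_cont (d := d)
  have m1 : Continuous fun z : GI d → ℝ => rexp (l * (largestSingularValue (Matrix.of (zM z)) + zx z)) := by fun_prop
  have m2 : Continuous fun z : GI d → ℝ => rexp (l * (√(zg z ⬝ᵥ zg z) + √(zh z ⬝ᵥ zh z) + ε)) := by
    refine Real.continuous_exp.comp (continuous_const.mul (((Continuous.sqrt ?_).add (Continuous.sqrt ?_)).add continuous_const))
    · exact c3.dotProduct c3
    · exact c4.dotProduct c4
  rw [lintegral_eq_lintegral_meas_lt _ (Filter.Eventually.of_forall fun z => (Real.exp_pos _).le) m1.aemeasurable,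
    lintegral_eq_lintegral_meas_le _ (Filter.Eventually.of_forall fun z => (Real.exp_pos _).le) m2.aemeasurable]
  refine setLIntegral_mono' measurableSet_Ioi fun t ht => ?_
  have ht : 0 < t := ht
  have := chev hd (Real.log t / l) ε hε
  convert this using 2
  · ext z
    simp only [Set.mem_ofPred_eq]
    rw [← Real.log_lt_iff_lt_exp ht, div_lt_iff₀' hl]
  · ext z
    simp only [Set.mem_ofPred_eq]
    rw [← Real.log_le_iff_le_exp ht, sub_le_iff_le_add, div_le_iff₀' hl]

theorem mpZ (d : ℕ) : MeasurePreserving (fun z : GI d → ℝ => (zM z, zx z)) (gi (GI d)) ((gm d).prod (gaussianReal 0 1)) := by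
  have h1 := measurePreserving_sumPiEquivProdPi (fun _ : GI d => gaussianReal 0 1)
  have hg : MeasurePreserving (MeasurableEquiv.curry (Fin d) (Fin d) ℝ) (gi (Fin d × Fin d)) (gm d) := by
    refine ⟨by fun_prop, ?_⟩
    have := Measure.infinitePi_map_curry (X := ℝ) (μ := fun (_ : Fin d) (_ : Fin d) => gaussianReal 0 1)
    simp only [Measure.infinitePi_eq_pi] at this
    exact this
  have he := measurePreserving_eval (fun _ : Unit ⊕ (Fin d ⊕ Fin d) => gaussianReal 0 1) (Sum.inl ())
  exact (hg.prod he).comp h1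

theorem mpg (d : ℕ) : MeasurePreserving (fun z : GI d → ℝ => (zg z, zh z)) (gi (GI d)) ((gv d).prod (gv d)) := by
  have h1 := measurePreserving_sumPiEquivProdPi (fun _ : GI d => gaussianReal 0 1)
  have h2 := measurePreserving_sumPiEquivProdPi (fun _ : Unit ⊕ (Fin d ⊕ Fin d) => gaussianReal 0 1)
  have h3 := measurePreserving_sumPiEquivProdPi (fun _ : (Fin d ⊕ Fin d) => gaussianReal 0 1)
  have h1' := measurePreserving_snd.comp h1
  have h2' := measurePreserving_snd.comp h2
  exact h3.comp (h2'.comp h1')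

theorem mgf_norm {d : ℕ} (hd : 1 ≤ d) (l : ℝ) (hl : 0 < l) :
    ∫⁻ g, ENNReal.ofReal (rexp (l * √(g ⬝ᵥ g))) ∂(gv d) ≤ ENNReal.ofReal (rexp (l * √d + l ^ 2 / 2)) := by
  have hd0 : (0 : ℝ) < d := by exact_mod_cast hd
  set s := √(d : ℝ) with hs
  have hs0 : 0 < s := Real.sqrt_pos.2 hd0
  have hs2 : s ^ 2 = d := Real.sq_sqrt hd0.le
  obtain ⟨X, hX⟩ : ∃ X, X = l / s := ⟨_, rfl⟩
  have hX0 : 0 < X := by rw [hX]; positivity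
  have hlX : l = X * s := by rw [hX]; field_simp
  obtain ⟨y, hy⟩ : ∃ y, y = (X + √(X ^ 2 + 4)) / 2 := ⟨_, rfl⟩
  have hq : √(X ^ 2 + 4) ^ 2 = X ^ 2 + 4 := Real.sq_sqrt (by positivity)
  have hy2 : y ^ 2 = X * y + 1 := by rw [hy]; linear_combination hq / 4
  have hy0 : 0 < y := by rw [hy]; positivity
  have hXy : X = y - 1 / y := by field_simp; linarith
  have hgs := gauss_exp_sq (-(X / y)) (by
    rw [neg_lt_neg_iff, div_lt_one hy0]
    nlinarith)
  have hval : (√(1 + -(X / y)))⁻¹ = y := by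
    have : 1 + -(X / y) = (y⁻¹) ^ 2 := by field_simp; linarith
    rw [this, Real.sqrt_sq (by positivity), inv_inv]
  rw [hval] at hgs
  have hpt : ∀ g : Fin d → ℝ, rexp (l * √(g ⬝ᵥ g)) ≤
      rexp (l * (y * s) / 2) * ∏ i, rexp (-(-(X / y)) * g i ^ 2 / 2) := by
    intro g
    rw [← Real.exp_sum, ← Real.exp_add]
    apply Real.exp_le_exp.2
    have e : ∑ i, -(-(X / y)) * g i ^ 2 / 2 = X / y / 2 * (g ⬝ᵥ g) := by
      rw [← dot_self_eq, Finset.mul_sum]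
      exact Finset.sum_congr rfl fun i _ => by ring
    rw [e]
    have hr := Real.sq_sqrt (dot_self_nn g)
    set r := √(g ⬝ᵥ g)
    rw [← hr, hlX]
    have : X * s * (y * s) / 2 + X / y / 2 * r ^ 2 - X * s * r = X / (2 * y) * (y * s - r) ^ 2 := by
      field_simp; ring
    have h2 : 0 ≤ X / (2 * y) * (y * s - r) ^ 2 := by positivity
    linarith
  have hIntg : Integrable (fun g : Fin d → ℝ => rexp (l * (y * s) / 2) * ∏ i, rexp (-(-(X / y)) * g i ^ 2 / 2)) (gv d) :=
    (Integrable.fintype_prod (f := fun (_ : Fin d) (x : ℝ) => rexp (-(-(X / y)) * x ^ 2 / 2)) fun i => hgs.1).const_mul _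
  calc _ ≤ ∫⁻ g, ENNReal.ofReal (rexp (l * (y * s) / 2) * ∏ i, rexp (-(-(X / y)) * g i ^ 2 / 2)) ∂(gv d) :=
        lintegral_mono fun g => ENNReal.ofReal_le_ofReal (hpt g)
    _ = ENNReal.ofReal (rexp (l * (y * s) / 2) * y ^ d) := by
        rw [← ofReal_integral_eq_lintegral_ofReal hIntg (Filter.Eventually.of_forall fun g => by positivity),
          integral_const_mul,
          integral_fintype_prod_eq_prod (f := fun (_ : Fin d) (x : ℝ) => rexp (-(-(X / y)) * x ^ 2 / 2)), hgs.2]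
        simp
    _ ≤ _ := by
        apply ENNReal.ofReal_le_ofReal
        have h1 : y ≤ rexp (y - 1) := by linarith [Real.add_one_le_exp (y - 1)]
        have h2 : y ^ d ≤ rexp (d * (y - 1)) := by
          rw [Real.exp_nat_mul]; exact pow_le_pow_left₀ hy0.le h1 d
        refine (mul_le_mul_of_nonneg_left h2 (Real.exp_pos _).le).trans ?_
        rw [← Real.exp_add]
        apply Real.exp_le_exp.2
        have : l * s + l ^ 2 / 2 - (l * (y * s) / 2 + d * (y - 1)) = d * ((1 - 1 / y) ^ 2 / 2) := by
          rw [hlX, ← hs2, hXy]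
          field_simp; ring
        have h3 : 0 ≤ (d : ℝ) * ((1 - 1 / y) ^ 2 / 2) := by positivity
        linarith

theorem mgf_gs (l : ℝ) : ∫⁻ x, ENNReal.ofReal (rexp (l * x)) ∂(gaussianReal 0 1) = ENNReal.ofReal (rexp (l ^ 2 / 2)) := by
  rw [← ofReal_integral_eq_lintegral_ofReal (integrable_exp_mul_gaussianReal l)
    (Filter.Eventually.of_forall fun g => (Real.exp_pos _).le)]
  have := mgf_gaussianReal (p := gaussianReal 0 1) (X := id) (μ := 0) (v := 1) (by simp) l
  simp only [mgf, id] at this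
  rw [this]
  simp

theorem mgf_large {d : ℕ} (hd : 1 ≤ d) (l ε : ℝ) (hl : 0 < l) (hε : 0 < ε) :
    ∫⁻ Z, ENNReal.ofReal (rexp (l * largestSingularValue (Matrix.of Z))) ∂(gm d) ≤
      ENNReal.ofReal (rexp (2 * l * √d + l ^ 2 / 2 + l * ε)) := by
  have h := chev_mgf hd l ε hl hε
  have mZ : Measurable fun Z : Fin d → Fin d → ℝ => ENNReal.ofReal (rexp (l * largestSingularValue (Matrix.of Z))) := by
    have := (large_cont d).measurable
    fun_prop
  have mx : Measurable fun x : ℝ => ENNReal.ofReal (rexp (l * x)) := by fun_prop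
  have mg : Measurable fun g : Fin d → ℝ => ENNReal.ofReal (rexp (l * √(g ⬝ᵥ g))) := by
    have : Continuous fun g : Fin d → ℝ => g ⬝ᵥ g := by fun_prop
    have := this.measurable
    fun_prop
  have mP : Measurable fun z : (Fin d → Fin d → ℝ) × ℝ =>
      ENNReal.ofReal (rexp (l * largestSingularValue (Matrix.of z.1))) * ENNReal.ofReal (rexp (l * z.2)) :=
    (mZ.comp measurable_fst).mul (mx.comp measurable_snd)
  have e1 : ∫⁻ z, ENNReal.ofReal (rexp (l * (largestSingularValue (Matrix.of (zM z)) + zx z))) ∂(gi (GI d)) =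
      (∫⁻ Z, ENNReal.ofReal (rexp (l * largestSingularValue (Matrix.of Z))) ∂(gm d)) * ENNReal.ofReal (rexp (l ^ 2 / 2)) := by
    rw [← mgf_gs, ← lintegral_prod_mul mZ.aemeasurable mx.aemeasurable, ← (mpZ d).map_eq,
      lintegral_map mP (mpZ d).measurable]
    refine lintegral_congr fun z => ?_
    rw [← ENNReal.ofReal_mul (Real.exp_pos _).le, ← Real.exp_add, mul_add]
  have e2 : ∫⁻ z, ENNReal.ofReal (rexp (l * (√(zg z ⬝ᵥ zg z) + √(zh z ⬝ᵥ zh z) + ε))) ∂(gi (GI d)) =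
      ((∫⁻ g, ENNReal.ofReal (rexp (l * √(g ⬝ᵥ g))) ∂(gv d)) * ∫⁻ g, ENNReal.ofReal (rexp (l * √(g ⬝ᵥ g))) ∂(gv d)) *
        ENNReal.ofReal (rexp (l * ε)) := by
    rw [← lintegral_prod_mul mg.aemeasurable mg.aemeasurable, ← (mpg d).map_eq,
      lintegral_map (by fun_prop) (mpg d).measurable, ← lintegral_mul_const' _ _ ENNReal.ofReal_ne_top]
    refine lintegral_congr fun z => ?_
    rw [← ENNReal.ofReal_mul (Real.exp_pos _).le, ← Real.exp_add, ← ENNReal.ofReal_mul (Real.exp_pos _).le,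
      ← Real.exp_add, mul_add, mul_add]
  rw [e1, e2] at h
  have hm := mgf_norm hd l hl
  have h2 := h.trans (mul_le_mul_left (mul_le_mul' hm hm) _)
  rw [← ENNReal.ofReal_mul (Real.exp_pos _).le, ← Real.exp_add, ← ENNReal.ofReal_mul (Real.exp_pos _).le,
      ← Real.exp_add] at h2
  have e3 : l * √d + l ^ 2 / 2 + (l * √d + l ^ 2 / 2) + l * ε = (2 * l * √d + l ^ 2 / 2 + l * ε) + l ^ 2 / 2 := by ring
  rw [e3, Real.exp_add, ENNReal.ofReal_mul (Real.exp_pos _).le] at h2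
  exact (ENNReal.mul_le_mul_iff_left (by simpa using Real.exp_pos _) ENNReal.ofReal_ne_top).1 h2

theorem part2 {d : ℕ} (hd : 1 ≤ d) (β : ℝ) (hβ0 : 0 < β) (hβ1 : β < 1) :
    (gm d) {Z | largestSingularValue (Matrix.of Z) ≥ 2 * √d + √(2 * Real.log (1 / β))} ≤ ENNReal.ofReal β := by
  have hlog : 0 < 2 * Real.log (1 / β) := by
    have := Real.log_pos (one_lt_one_div hβ0 hβ1)
    linarith
  have hl2 := Real.sq_sqrt hlog.le
  have hl := Real.sqrt_pos.2 hlog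
  set l := √(2 * Real.log (1 / β))
  have hb : rexp (-(l ^ 2 / 2)) = β := by
    rw [hl2]
    have : -(2 * Real.log (1 / β) / 2) = Real.log β := by rw [one_div, Real.log_inv]; ring
    rw [this, Real.exp_log hβ0]
  have key : ∀ ε : ℝ, 0 < ε → (gm d) {Z | largestSingularValue (Matrix.of Z) ≥ 2 * √d + l} ≤
      ENNReal.ofReal (rexp (l * ε - l ^ 2 / 2)) := by
    intro ε hε
    have hm := mgf_large hd l ε hl hε
    have mZ : Measurable fun Z : Fin d → Fin d → ℝ => ENNReal.ofReal (rexp (l * largestSingularValue (Matrix.of Z))) := by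
      have := (large_cont d).measurable
      fun_prop
    have := mul_meas_ge_le_lintegral (μ := gm d) mZ (ENNReal.ofReal (rexp (l * (2 * √d + l))))
    have hs : {Z : Fin d → Fin d → ℝ | largestSingularValue (Matrix.of Z) ≥ 2 * √d + l} ⊆
        {Z | ENNReal.ofReal (rexp (l * (2 * √d + l))) ≤ ENNReal.ofReal (rexp (l * largestSingularValue (Matrix.of Z)))} := by
      intro Z hZ
      exact ENNReal.ofReal_le_ofReal (Real.exp_le_exp.2 (mul_le_mul_of_nonneg_left hZ hl.le))
    have h2 := (mul_le_mul_right (measure_mono (μ := gm d) hs) (ENNReal.ofReal (rexp (l * (2 * √d + l))))).trans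
      (this.trans hm)
    have e : 2 * l * √d + l ^ 2 / 2 + l * ε = l * (2 * √d + l) + (l * ε - l ^ 2 / 2) := by ring
    rw [e, Real.exp_add, ENNReal.ofReal_mul (Real.exp_pos _).le] at h2
    exact (ENNReal.mul_le_mul_iff_right (by simpa using Real.exp_pos _) ENNReal.ofReal_ne_top).1 h2
  have ht : Filter.Tendsto (fun ε : ℝ => ENNReal.ofReal (rexp (l * ε - l ^ 2 / 2))) (nhdsWithin 0 (Set.Ioi 0))
      (nhds (ENNReal.ofReal (rexp (l * 0 - l ^ 2 / 2)))) := by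
    refine Filter.Tendsto.mono_left ?_ nhdsWithin_le_nhds
    have : Continuous fun ε : ℝ => ENNReal.ofReal (rexp (l * ε - l ^ 2 / 2)) :=
      ENNReal.continuous_ofReal.comp (by fun_prop)
    exact this.tendsto 0
  have := ge_of_tendsto ht (Filter.eventually_of_mem self_mem_nhdsWithin key)
  rwa [mul_zero, zero_sub, hb] at this

theorem gaussian_matrix_singular_values {d : ℕ} (hd : 1 ≤ d) (β : ℝ)
    (hβ0 : 0 < β) (hβ1 : β < 1) :
    (Measure.pi fun _ : Fin d => Measure.pi fun _ : Fin d => gaussianReal 0 1)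
        {Z | smallestSingularValue (Matrix.of Z) ≤ β / Real.sqrt d} ≤ ENNReal.ofReal β ∧
    (Measure.pi fun _ : Fin d => Measure.pi fun _ : Fin d => gaussianReal 0 1)
        {Z | largestSingularValue (Matrix.of Z) ≥
          2 * Real.sqrt d + Real.sqrt (2 * Real.log (1 / β))} ≤ ENNReal.ofReal β := by
  refine ⟨?_, part2 hd β hβ0 hβ1⟩
  have hd0 : (0 : ℝ) < d := by exact_mod_cast hd
  have hs := Real.sqrt_pos.2 hd0
  have h := part1 hd (β / Real.sqrt d) (by positivity)
  rwa [mul_div_cancel₀ _ hs.ne'] at h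
end
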